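/- Let u : ℝ² → ℝ be a C² function such that Δu ≤ 0 everywhere, the function K := (-Δu)·e^{-2u} is bounded on ℝ², Δu is not identically zero, and the conformal metric e^{2u}(dx²+dy²) is complete in the sense that for every C¹ curve γ : [0,1) → ℝ² with |γ(t)| → ∞ as t → 1⁻ one has ∫₀¹ e^{u(γ(t))}‖γ′(t)‖ dt = ∞. Then there exists m ∈ (0,1] such that u(z)/log√(1+|z|²) → -m as |z| → ∞ (equivalently, u(z) = -m·log√(1+|z|²) + o(log√(1+|z|²)) as |z| → ∞). -/

import Mathlib

open MeasureTheory Filter Metric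
open scoped ENNReal

/-- The Euclidean Laplacian of a function on `ℝ²`:
`Δu = ∂²u/∂x² + ∂²u/∂y²`. -/
noncomputable def lap (u : EuclideanSpace ℝ (Fin 2) → ℝ)
    (z : EuclideanSpace ℝ (Fin 2)) : ℝ :=
  fderiv ℝ (fun w => fderiv ℝ u w (EuclideanSpace.single 0 1)) z (EuclideanSpace.single 0 1) +
  fderiv ℝ (fun w => fderiv ℝ u w (EuclideanSpace.single 1 1)) z (EuclideanSpace.single 1 1)

open scoped Real Topology Laplacian

/-!
Since the metric is complete, almost minimizing paths from `o` stay bounded. Moving such a path by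
the complex multiples of the field that would dilate a flat metric shows, because `Δ u ≤ 0`, that
the logarithm of the ratio of the conformal and Euclidean distances from `o` is superharmonic. With
completeness this gives `u ≥ -(1 + ε) log R` on arbitrarily large circles `|z| = R`. The circle
averages of `u` have derivative `-μ(R) / R`, where `2πμ(R)` is the total curvature of the disc of
radius `R`; hence `μ` increases to a limit `m ≤ 1`, and the averages behave like `-m log R`.

It remains to compare `u(z)` with its average over `|w| = |z|`. The curvature of the annuli
`R / 2 ≤ |z| < 2R` tends to zero, so only concentration of `u` at a point could separate the two;
rescaling at a point chosen by Hofer's lemma excludes it because the Gaussian curvature is bounded.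
-/

section CircleAverage

open Real

variable {F : Type*} [NormedAddCommGroup F] [NormedSpace ℝ F]

theorem setIntegral_ball_eq_setIntegral_circleMap (g : ℂ → F) (c : ℂ) (R : ℝ) :
    ∫ z in ball c R, g z =
      ∫ p in Set.Ioo 0 R ×ˢ Set.Ioo (-π) π, p.1 • g (circleMap c p.1 p.2) := by
  have translate : ∫ z in ball c R, g z = ∫ z, (ball c R).indicator g (c + z) := by
    rw [← integral_indicator measurableSet_ball, integral_add_left_eq_self]
  rw [translate, ← Complex.integral_comp_polarCoord_symm, polarCoord_target,
    ← integral_indicator (measurableSet_Ioi.prod measurableSet_Ioo),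
    ← integral_indicator (measurableSet_Ioo.prod measurableSet_Ioo)]
  classical
  congr 1 with p
  have polar : c + Complex.polarCoord.symm p = circleMap c p.1 p.2 := by
    rw [Complex.polarCoord_symm_apply, circleMap, Complex.exp_mul_I]
    push_cast
    rfl
  simp only [Set.indicator_apply, Set.mem_prod, Set.mem_Ioi, Set.mem_Ioo, polar, mem_ball,
    dist_eq_norm, circleMap_sub_center, norm_circleMap_zero]
  by_cases hp : 0 < p.1
  · simp only [hp, abs_of_pos hp, true_and]
    split_ifs <;> simp_all
  · simp [hp]

theorem setIntegral_ball_eq_integral_circleAverage {g : ℂ → F} (hg : Continuous g) (c : ℂ) {R : ℝ}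
    (hR : 0 ≤ R) : ∫ z in ball c R, g z = ∫ s in (0)..R, (2 * π * s) • circleAverage g c s := by
  have integrable : IntegrableOn (fun p : ℝ × ℝ => p.1 • g (circleMap c p.1 p.2))
      (Set.Ioo 0 R ×ˢ Set.Ioo (-π) π) (volume.prod volume) :=
    ((Continuous.continuousOn (by fun_prop)).integrableOn_compact
      (isCompact_Icc.prod isCompact_Icc)).mono_set
        (Set.prod_mono Set.Ioo_subset_Icc_self Set.Ioo_subset_Icc_self)
  have average (s : ℝ) :
      ∫ θ in Set.Ioo (-π) π, g (circleMap c s θ) = (2 * π) • circleAverage g c s := by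
    rw [circleAverage_eq_integral_add (-π), smul_inv_smul₀ (by positivity),
      intervalIntegral.integral_comp_add_right (fun t => g (circleMap c s t)),
      ← integral_Ioc_eq_integral_Ioo, ← intervalIntegral.integral_of_le (by linarith [pi_pos])]
    congr 1 <;> ring
  rw [setIntegral_ball_eq_setIntegral_circleMap, Measure.volume_eq_prod,
    setIntegral_prod _ integrable, intervalIntegral.integral_of_le hR,
    integral_Ioc_eq_integral_Ioo]
  refine setIntegral_congr_fun measurableSet_Ioo fun s _ => ?_
  simp only [integral_smul, average, smul_smul, mul_comm]

theorem hasDerivAt_intervalIntegral_of_continuous {f f' : ℝ → ℝ → F} (a b s : ℝ)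
    (hf : ∀ s, Continuous (f s)) (hf' : Continuous (Function.uncurry f'))
    (hderiv : ∀ s t, HasDerivAt (fun s => f s t) (f' s t) s) :
    HasDerivAt (fun s => ∫ t in a..b, f s t) (∫ t in a..b, f' s t) s := by
  obtain ⟨M, hM⟩ := ((isCompact_closedBall s 1).prod
    (isCompact_uIcc (a := a) (b := b))).exists_bound_of_continuousOn hf'.continuousOn
  refine (intervalIntegral.hasDerivAt_integral_of_dominated_loc_of_deriv_le
    (closedBall_mem_nhds s one_pos) (.of_forall fun s => (hf s).aestronglyMeasurable)
    ((hf s).intervalIntegrable a b)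
    (Continuous.aestronglyMeasurable (by fun_prop)) (bound := fun _ => M) ?_
    intervalIntegrable_const ?_).2
  · exact .of_forall fun t ht x hx => hM (x, t) ⟨hx, Set.uIoc_subset_uIcc ht⟩
  · exact .of_forall fun t _ x _ => hderiv x t

theorem hasDerivAt_circleMap_radius (c : ℂ) (θ s : ℝ) :
    HasDerivAt (fun s => circleMap c s θ) (circleMap 0 1 θ) s := by
  simpa [circleMap] using ((Complex.ofRealCLM.hasDerivAt (x := s)).mul_const
    (Complex.exp (θ * Complex.I))).const_add c

/-- The mean over the unit circle of the radial derivative of `u` at distance `r` from `c`. -/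
noncomputable def meanRadialDeriv (u : ℂ → F) (c : ℂ) (r : ℝ) : F :=
  (2 * π)⁻¹ • ∫ θ in (0)..2 * π, fderiv ℝ u (circleMap c r θ) (circleMap 0 1 θ)

theorem hasDerivAt_circleAverage_meanRadialDeriv {u : ℂ → F} (hu : ContDiff ℝ 1 u) (c : ℂ)
    (r : ℝ) : HasDerivAt (circleAverage u c) (meanRadialDeriv u c r) r := by
  have : Continuous (fderiv ℝ u) := hu.continuous_fderiv one_ne_zero
  have key : HasDerivAt (fun s => ∫ θ in (0)..2 * π, u (circleMap c s θ))
      (∫ θ in (0)..2 * π, fderiv ℝ u (circleMap c r θ) (circleMap 0 1 θ)) r := by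
    refine hasDerivAt_intervalIntegral_of_continuous (f := fun s θ => u (circleMap c s θ))
      (f' := fun s θ => fderiv ℝ u (circleMap c s θ) (circleMap 0 1 θ)) 0 (2 * π) r
      (fun s => hu.continuous.comp (continuous_circleMap c s)) ?_ fun s θ => ?_
    · simp only [Function.uncurry_def]
      fun_prop
    · exact ((hu.differentiable one_ne_zero _).hasFDerivAt).comp_hasDerivAt s
        (hasDerivAt_circleMap_radius c θ s)
  exact key.const_smul (2 * π)⁻¹

theorem norm_sq_smul_laplacian (u : ℂ → F) (z v : ℂ) :
    ‖v‖ ^ 2 • Δ u z = fderiv ℝ (fderiv ℝ u) z v v +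
      fderiv ℝ (fderiv ℝ u) z (v * Complex.I) (v * Complex.I) := by
  have decompose : v = v.re • (1 : ℂ) + v.im • Complex.I := by
    apply Complex.ext <;> simp
  have rotate : v * Complex.I = v.re • Complex.I - v.im • (1 : ℂ) := by
    apply Complex.ext <;> simp
  rw [rotate]
  nth_rw 2 3 [decompose]
  simp only [InnerProductSpace.laplacian_eq_iteratedFDeriv_complexPlane, iteratedFDeriv_two_apply,
    Matrix.cons_val_zero, Matrix.cons_val_one, ← Complex.normSq_eq_norm_sq, Complex.normSq_apply,
    map_add, map_sub, map_smul, add_apply, sub_apply, smul_apply]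
  module

variable {u : ℂ → F}

theorem continuous_laplacian (hu : ContDiff ℝ 2 u) : Continuous (Δ u) := by
  have : Continuous (iteratedFDeriv ℝ 2 u) := hu.continuous_iteratedFDeriv (by norm_num)
  rw [InnerProductSpace.laplacian_eq_iteratedFDeriv_complexPlane]
  fun_prop

section Hessian

variable (hu : ContDiff ℝ 2 u)
include hu

theorem differentiable_fderiv : Differentiable ℝ (fderiv ℝ u) :=
  (hu.fderiv_right (m := 1) (by norm_num)).differentiable one_ne_zero

theorem hasDerivAt_smul_radialDeriv (c : ℂ) (θ s : ℝ) :
    HasDerivAt (fun s => s • fderiv ℝ u (circleMap c s θ) (circleMap 0 1 θ))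
      (fderiv ℝ u (circleMap c s θ) (circleMap 0 1 θ) +
        s • fderiv ℝ (fderiv ℝ u) (circleMap c s θ) (circleMap 0 1 θ) (circleMap 0 1 θ)) s := by
  have hfderiv := (differentiable_fderiv hu (circleMap c s θ)).hasFDerivAt.comp_hasDerivAt s
    (hasDerivAt_circleMap_radius c θ s)
  have radial := hfderiv.clm_apply (hasDerivAt_const s (circleMap 0 1 θ))
  simpa [add_comm] using (hasDerivAt_id' s).fun_smul radial

theorem hasDerivAt_angularDeriv (c : ℂ) (s θ : ℝ) :
    HasDerivAt (fun θ => fderiv ℝ u (circleMap c s θ) (circleMap 0 1 θ * Complex.I))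
      (s • fderiv ℝ (fderiv ℝ u) (circleMap c s θ) (circleMap 0 1 θ * Complex.I)
        (circleMap 0 1 θ * Complex.I) - fderiv ℝ u (circleMap c s θ) (circleMap 0 1 θ)) θ := by
  have hfderiv := (differentiable_fderiv hu (circleMap c s θ)).hasFDerivAt.comp_hasDerivAt θ
    (hasDerivAt_circleMap c s θ)
  have angular := hfderiv.clm_apply ((hasDerivAt_circleMap 0 1 θ).mul_const Complex.I)
  have tangent : circleMap 0 s θ * Complex.I = s • (circleMap 0 1 θ * Complex.I) := by
    simp [circleMap, mul_assoc]
  have normal : circleMap 0 1 θ * Complex.I * Complex.I = -circleMap 0 1 θ := by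
    rw [mul_assoc, Complex.I_mul_I, mul_neg_one]
  simpa only [tangent, normal, map_smul, map_neg, smul_apply, Function.comp_apply,
    ← sub_eq_add_neg] using angular

variable [CompleteSpace F]

theorem hasDerivAt_smul_meanRadialDeriv (c : ℂ) (s : ℝ) :
    HasDerivAt (fun s => s • meanRadialDeriv u c s) (s • circleAverage (Δ u) c s) s := by
  have : Continuous (fderiv ℝ u) := hu.continuous_fderiv two_ne_zero
  have : Continuous (fderiv ℝ (fderiv ℝ u)) :=
    (hu.fderiv_right (m := 1) (by norm_num)).continuous_fderiv one_ne_zero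
  have key := (hasDerivAt_intervalIntegral_of_continuous 0 (2 * π) s (fun s => by fun_prop)
    (by simp only [Function.uncurry_def]; fun_prop)
    (fun s θ => hasDerivAt_smul_radialDeriv hu c θ s)).const_smul (2 * π)⁻¹
  convert key using 1
  · ext s
    simp only [meanRadialDeriv, Pi.smul_apply, intervalIntegral.integral_smul, smul_comm s]
  rw [circleAverage_def, smul_comm, ← intervalIntegral.integral_smul]
  congr 1
  -- The integrands differ by the derivative of the angular derivative, which is periodic.
  rw [← sub_eq_zero, ← intervalIntegral.integral_sub
    (Continuous.intervalIntegrable (by have := continuous_laplacian hu; fun_prop) _ _)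
    (Continuous.intervalIntegrable (by fun_prop) _ _)]
  calc _ = ∫ θ in (0)..2 * π, (s • fderiv ℝ (fderiv ℝ u) (circleMap c s θ)
        (circleMap 0 1 θ * Complex.I) (circleMap 0 1 θ * Complex.I) -
          fderiv ℝ u (circleMap c s θ) (circleMap 0 1 θ)) := by
        congr 1 with θ
        have := norm_sq_smul_laplacian u (circleMap c s θ) (circleMap 0 1 θ)
        rw [norm_circleMap_zero, abs_one, one_pow, one_smul] at this
        rw [this, smul_add]
        abel
    _ = 0 := by
        rw [intervalIntegral.integral_eq_sub_of_hasDerivAt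
          (fun θ _ => hasDerivAt_angularDeriv hu c s θ)
          (Continuous.intervalIntegrable (by fun_prop) _ _)]
        simp [circleMap]

theorem smul_meanRadialDeriv (c : ℂ) {r : ℝ} (hr : 0 ≤ r) :
    r • meanRadialDeriv u c r = (2 * π)⁻¹ • ∫ z in ball c r, Δ u z := by
  have hΔ := continuous_laplacian hu
  have fundamental := intervalIntegral.integral_eq_sub_of_hasDerivAt
    (fun s _ => hasDerivAt_smul_meanRadialDeriv hu c s)
    (Continuous.intervalIntegrable (by fun_prop) 0 r)
  rw [setIntegral_ball_eq_integral_circleAverage hΔ c hr]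
  simp only [mul_smul _ _ (circleAverage _ _ _), intervalIntegral.integral_smul]
  rw [fundamental, zero_smul, sub_zero, inv_smul_smul₀ (by positivity)]

theorem hasDerivAt_circleAverage (c : ℂ) {r : ℝ} (hr : 0 < r) :
    HasDerivAt (circleAverage u c) ((2 * π * r)⁻¹ • ∫ z in ball c r, Δ u z) r := by
  refine (hasDerivAt_circleAverage_meanRadialDeriv (hu.of_le one_le_two) c r).congr_deriv ?_
  rw [mul_inv_rev, mul_smul, ← smul_meanRadialDeriv hu c hr.le, inv_smul_smul₀ hr.ne']

end Hessian

end CircleAverage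

section SymmetricDifference

variable {E F : Type*} [NormedAddCommGroup E] [NormedSpace ℝ E] [NormedAddCommGroup F]
  [NormedSpace ℝ F]

theorem norm_symmetric_difference_le {f : E → F} {B : E →L[ℝ] E →L[ℝ] F} {z h : E} {η : ℝ}
    (hf : ∀ t ∈ Set.Icc (-1 : ℝ) 1, DifferentiableAt ℝ f (z + t • h))
    (bound : ∀ t ∈ Set.Icc (0 : ℝ) 1,
      ‖fderiv ℝ f (z + t • h) - fderiv ℝ f (z + (-t) • h) - B ((2 * t) • h)‖ ≤ η * ‖h‖) :
    ‖f (z + h) + f (z - h) - (2 : ℝ) • f z - B h h‖ ≤ η * ‖h‖ ^ 2 := by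
  have hderiv (t : ℝ) (ht : t ∈ Set.Icc (-1 : ℝ) 1) :
      HasDerivAt (fun t : ℝ => f (z + t • h)) (fderiv ℝ f (z + t • h) h) t := by
    have line : HasDerivAt (fun t : ℝ => z + t • h) h t := by
      simpa using ((hasDerivAt_id t).smul_const h).const_add z
    exact (hf t ht).hasFDerivAt.comp_hasDerivAt t line
  let Φ (t : ℝ) : F := f (z + t • h) + f (z + (-t) • h) - t ^ 2 • B h h
  let Φ' (t : ℝ) : F :=
    (fderiv ℝ f (z + t • h) - fderiv ℝ f (z + (-t) • h) - B ((2 * t) • h)) h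
  have hΦ (t : ℝ) (ht : t ∈ Set.Icc (0 : ℝ) 1) : HasDerivAt Φ (Φ' t) t := by
    have forward := hderiv t ⟨by linarith [ht.1], ht.2⟩
    have backward := (hderiv (-t) ⟨by linarith [ht.2], by linarith [ht.1]⟩).scomp t
      (hasDerivAt_neg t)
    refine ((forward.add backward).sub ((hasDerivAt_pow 2 t).smul_const (B h h))).congr_deriv ?_
    simp [Φ', sub_eq_add_neg]
  have mean_value := norm_image_sub_le_of_norm_deriv_le_segment_01' (C := η * ‖h‖ ^ 2)
    (fun t ht => (hΦ t ht).hasDerivWithinAt) fun t ht =>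
      calc ‖Φ' t‖ ≤ η * ‖h‖ * ‖h‖ := (ContinuousLinearMap.le_opNorm _ h).trans
            (mul_le_mul_of_nonneg_right (bound t ⟨ht.1, ht.2.le⟩) (norm_nonneg h))
        _ = η * ‖h‖ ^ 2 := by ring
  convert mean_value using 2
  simp only [Φ, one_smul, neg_smul, zero_smul, neg_zero, add_zero, one_pow, ne_eq,
    OfNat.ofNat_ne_zero, not_false_eq_true, zero_pow, sub_eq_add_neg]
  module

theorem isLittleO_symmetric_difference {f : E → F} {x : E} (hf : ContDiffAt ℝ 2 f x) :
    (fun p : E × E => f (p.1 + p.2) + f (p.1 - p.2) - (2 : ℝ) • f p.1 -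
      fderiv ℝ (fderiv ℝ f) x p.2 p.2) =o[𝓝 (x, 0)] fun p => ‖p.2‖ ^ 2 := by
  refine Asymptotics.isLittleO_iff.2 fun η hη => ?_
  have strict : HasStrictFDerivAt (fderiv ℝ f) (fderiv ℝ (fderiv ℝ f) x) x :=
    (hf.fderiv_right (m := 1) (by norm_num)).hasStrictFDerivAt one_ne_zero
  have differentiable : ∀ᶠ z in 𝓝 x, DifferentiableAt ℝ f z :=
    (hf.eventually (by simp)).mono fun z hz => hz.differentiableAt two_ne_zero
  have segment : ∀ᶠ p : E × E in 𝓝 (x, 0), ∀ t ∈ Set.Icc (-1 : ℝ) 1,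
      DifferentiableAt ℝ f (p.1 + t • p.2) ∧
        ‖fderiv ℝ f (p.1 + t • p.2) - fderiv ℝ f (p.1 + (-t) • p.2) -
          fderiv ℝ (fderiv ℝ f) x (p.1 + t • p.2 - (p.1 + (-t) • p.2))‖ ≤
          η / 2 * ‖p.1 + t • p.2 - (p.1 + (-t) • p.2)‖ := by
    refine isCompact_Icc.eventually_forall_of_forall_eventually fun t _ => ?_
    have forward : Tendsto (fun q : (E × E) × ℝ => q.1.1 + q.2 • q.1.2) (𝓝 ((x, 0), t)) (𝓝 x) :=
      Continuous.tendsto' (by fun_prop) _ _ (by simp)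
    have backward : Tendsto (fun q : (E × E) × ℝ => q.1.1 + (-q.2) • q.1.2) (𝓝 ((x, 0), t))
        (𝓝 x) := Continuous.tendsto' (by fun_prop) _ _ (by simp)
    exact (forward.eventually differentiable).and
      ((forward.prodMk_nhds backward).eventually (strict.isLittleO.def (half_pos hη)))
  filter_upwards [segment] with p hp
  rw [norm_pow, norm_norm]
  refine norm_symmetric_difference_le (fun t ht => (hp t ht).1) fun t ht => ?_
  have bound := (hp t ⟨by linarith [ht.1], ht.2⟩).2
  have chord : p.1 + t • p.2 - (p.1 + (-t) • p.2) = (2 * t) • p.2 := by module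
  rw [chord, norm_smul, Real.norm_of_nonneg (by linarith [ht.1])] at bound
  refine bound.trans ?_
  rw [← mul_assoc]
  gcongr
  nlinarith [ht.2]

end SymmetricDifference

section SquareSuperharmonic

/-- The sum of `q` over the vertices of the square of center `z` with a vertex at `z + h`. -/
noncomputable def squareSum (q : ℂ → ℝ) (z h : ℂ) : ℝ :=
  q (z + h) + q (z - h) + (q (z + h * Complex.I) + q (z - h * Complex.I))

/-- A discrete form of superharmonicity for functions that need not be differentiable: near `z₀`,
the mean of `q` over the vertices of a small square exceeds the value at the center by at most an
arbitrarily small multiple of the squared size. -/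
def SquareSuperharmonicAt (q : ℂ → ℝ) (z₀ : ℂ) : Prop :=
  ∀ η > 0, ∀ᶠ p : ℂ × ℂ in 𝓝 (z₀, 0), squareSum q p.1 p.2 ≤ 4 * q p.1 + η * ‖p.2‖ ^ 2

theorem squareSuperharmonicAt_const (a : ℝ) (z₀ : ℂ) : SquareSuperharmonicAt (fun _ => a) z₀ := by
  refine fun η hη => .of_forall fun p => ?_
  have : 0 ≤ η * ‖p.2‖ ^ 2 := by positivity
  simp only [squareSum]
  linarith

theorem squareSuperharmonicAt_of_laplacian_nonpos {u : ℂ → ℝ} {z₀ : ℂ} (hu : ContDiffAt ℝ 2 u z₀)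
    (hΔ : Δ u z₀ ≤ 0) : SquareSuperharmonicAt u z₀ := by
  intro η hη
  have diagonal := (isLittleO_symmetric_difference hu).def (half_pos hη)
  have rotate : Tendsto (fun p : ℂ × ℂ => (p.1, p.2 * Complex.I)) (𝓝 (z₀, 0)) (𝓝 (z₀, 0)) :=
    Continuous.tendsto' (by fun_prop) _ _ (by simp)
  filter_upwards [diagonal, rotate.eventually diagonal] with p hp hq
  have trace := norm_sq_smul_laplacian u z₀ p.2
  have nonpos := mul_nonpos_of_nonneg_of_nonpos (sq_nonneg ‖p.2‖) hΔ
  simp only [norm_pow, norm_norm, norm_mul, Complex.norm_I, mul_one, smul_eq_mul] at hp hq trace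
  rw [squareSum]
  linarith [(Real.le_norm_self _).trans hp, (Real.le_norm_self _).trans hq]

theorem squareSuperharmonicAt_const_mul_log_norm_sub (a : ℝ) {o z₀ : ℂ} (h : z₀ ≠ o) :
    SquareSuperharmonicAt (fun z => a * Real.log ‖z - o‖) z₀ := by
  have analytic : AnalyticAt ℂ (fun z : ℂ => z - o) z₀ := by fun_prop
  have harmonic : InnerProductSpace.HarmonicAt (fun z => a * Real.log ‖z - o‖) z₀ :=
    (analytic.harmonicAt_log_norm (sub_ne_zero.2 h)).const_smul (c := a)
  exact squareSuperharmonicAt_of_laplacian_nonpos harmonic.1 harmonic.2.eq_of_nhds.le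

namespace SquareSuperharmonicAt

variable {q q₁ q₂ : ℂ → ℝ} {z₀ : ℂ}

theorem add (h₁ : SquareSuperharmonicAt q₁ z₀) (h₂ : SquareSuperharmonicAt q₂ z₀) :
    SquareSuperharmonicAt (fun z => q₁ z + q₂ z) z₀ := by
  intro η hη
  filter_upwards [h₁ (η / 2) (half_pos hη), h₂ (η / 2) (half_pos hη)] with p hp₁ hp₂
  simp only [squareSum] at *
  linarith

theorem min (h₁ : SquareSuperharmonicAt q₁ z₀) (h₂ : SquareSuperharmonicAt q₂ z₀) :
    SquareSuperharmonicAt (fun z => Min.min (q₁ z) (q₂ z)) z₀ := by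
  intro η hη
  filter_upwards [h₁ η hη, h₂ η hη] with p hp₁ hp₂
  simp only [squareSum] at *
  rcases le_total (q₁ p.1) (q₂ p.1) with h | h
  · rw [min_eq_left h]
    exact le_trans (by gcongr <;> exact min_le_left _ _) hp₁
  · rw [min_eq_right h]
    exact le_trans (by gcongr <;> exact min_le_right _ _) hp₂

theorem congr (h : SquareSuperharmonicAt q₁ z₀) (heq : q₁ =ᶠ[𝓝 z₀] q₂) :
    SquareSuperharmonicAt q₂ z₀ := by
  intro η hη
  have transport (f : ℂ × ℂ → ℂ) (hf : Continuous f) (hf₀ : f (z₀, 0) = z₀) :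
      ∀ᶠ p in 𝓝 (z₀, (0 : ℂ)), q₁ (f p) = q₂ (f p) :=
    (hf.tendsto' _ _ hf₀).eventually heq
  filter_upwards [h η hη, transport (fun p => p.1) (by fun_prop) (by simp),
    transport (fun p => p.1 + p.2) (by fun_prop) (by simp),
    transport (fun p => p.1 - p.2) (by fun_prop) (by simp),
    transport (fun p => p.1 + p.2 * Complex.I) (by fun_prop) (by simp),
    transport (fun p => p.1 - p.2 * Complex.I) (by fun_prop) (by simp)] with p hp e₀ e₁ e₂ e₃ e₄
  simpa only [squareSum, e₀, e₁, e₂, e₃, e₄] using hp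

theorem not_isLocalMin_sub_mul_norm_sq (h : SquareSuperharmonicAt q z₀) {η : ℝ} (hη : 0 < η) :
    ¬ IsLocalMin (fun z => q z - η * ‖z‖ ^ 2) z₀ := by
  intro hmin
  have superharmonic : ∀ᶠ v in 𝓝[≠] (0 : ℂ), squareSum q z₀ v ≤ 4 * q z₀ + η * ‖v‖ ^ 2 :=
    ((Continuous.prodMk_right z₀).tendsto 0).eventually (h η hη) |>.filter_mono nhdsWithin_le_nhds
  have minimal (f : ℂ → ℂ) (hf : Continuous f) (hf₀ : f 0 = z₀) :
      ∀ᶠ v in 𝓝[≠] (0 : ℂ), q z₀ - η * ‖z₀‖ ^ 2 ≤ q (f v) - η * ‖f v‖ ^ 2 :=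
    (hf.tendsto' _ _ hf₀).eventually hmin |>.filter_mono nhdsWithin_le_nhds
  obtain ⟨v, hv, h₁, h₂, h₃, h₄, hv₀⟩ := (superharmonic.and
    ((minimal (fun v => z₀ + v) (by fun_prop) (by simp)).and
    ((minimal (fun v => z₀ - v) (by fun_prop) (by simp)).and
    ((minimal (fun v => z₀ + v * Complex.I) (by fun_prop) (by simp)).and
    ((minimal (fun v => z₀ - v * Complex.I) (by fun_prop) (by simp)).and
    self_mem_nhdsWithin))))).exists
  have parallelogram₁ := parallelogram_law_with_norm ℝ z₀ v
  have parallelogram₂ := parallelogram_law_with_norm ℝ z₀ (v * Complex.I)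
  rw [norm_mul, Complex.norm_I, mul_one] at parallelogram₂
  rw [squareSum] at hv
  have nonpos : 3 * (η * ‖v‖ ^ 2) ≤ 0 := by
    linear_combination h₁ + h₂ + h₃ + h₄ + hv - η * parallelogram₁ - η * parallelogram₂
  have : 0 < ‖v‖ := norm_pos_iff.2 hv₀
  exact nonpos.not_gt (by positivity)

end SquareSuperharmonicAt

theorem minimum_principle {q : ℂ → ℝ} {K : Set ℂ} {m : ℝ} (hK : IsCompact K)
    (hc : ContinuousOn q K) (hq : ∀ z ∈ interior K, SquareSuperharmonicAt q z)
    (hm : ∀ z ∈ frontier K, m ≤ q z) {z : ℂ} (hz : z ∈ K) : m ≤ q z := by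
  by_contra! hlt
  obtain ⟨R, hR⟩ := hK.isBounded.exists_norm_le
  obtain ⟨η, hη, hηR⟩ : ∃ η > 0, η * R ^ 2 < m - q z :=
    exists_pos_mul_lt (sub_pos.2 hlt) _ |>.imp fun η h => by rwa [mul_comm η]
  obtain ⟨w, hw, hmin⟩ := hK.exists_isMinOn (f := fun z => q z - η * ‖z‖ ^ 2) ⟨z, hz⟩
    (hc.sub (by fun_prop))
  have hw_interior : w ∈ interior K := by
    by_contra hw_frontier
    have boundary := hm w (hK.isClosed.frontier_eq ▸ ⟨hw, hw_frontier⟩)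
    have minimal : q w - η * ‖w‖ ^ 2 ≤ q z - η * ‖z‖ ^ 2 := hmin hz
    have : η * ‖w‖ ^ 2 ≤ η * R ^ 2 := by gcongr; exact hR w hw
    have : 0 ≤ η * ‖z‖ ^ 2 := by positivity
    linarith
  exact (hq w hw_interior).not_isLocalMin_sub_mul_norm_sq hη
    (hmin.isLocalMin (mem_interior_iff_mem_nhds.1 hw_interior))

theorem circleAverage_norm (q : ℂ → ℝ) (c y : ℂ) :
    Real.circleAverage q c ‖y‖ = Real.circleAverage (fun w => q (c + w * y)) 0 1 := by
  rw [Real.circleAverage_eq_integral_add y.arg, Real.circleAverage_def]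
  congr 2 with θ
  congr 1
  nth_rw 3 [← Complex.norm_mul_exp_arg_mul_I y]
  simp only [circleMap, Complex.ofReal_add, Complex.ofReal_one, add_mul, Complex.exp_add]
  ring

theorem squareSuperharmonicAt_circleAverage {q : ℂ → ℝ} (hc : Continuous q)
    (hq : ∀ z, SquareSuperharmonicAt q z) (c y₀ : ℂ) :
    SquareSuperharmonicAt (fun y => Real.circleAverage q c ‖y‖) y₀ := by
  intro η hη
  have rotated : ∀ᶠ p : ℂ × ℂ in 𝓝 (y₀, 0), ∀ w ∈ sphere (0 : ℂ) 1,
      squareSum q (c + w * p.1) (w * p.2) ≤ 4 * q (c + w * p.1) + η * ‖w * p.2‖ ^ 2 := by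
    refine (isCompact_sphere _ _).eventually_forall_of_forall_eventually fun w _ => ?_
    have : Tendsto (fun x : (ℂ × ℂ) × ℂ => (c + x.2 * x.1.1, x.2 * x.1.2)) (𝓝 ((y₀, 0), w))
        (𝓝 (c + w * y₀, 0)) := Continuous.tendsto' (by fun_prop) _ _ (by simp)
    exact this.eventually (hq _ η hη)
  filter_upwards [rotated] with p hp
  have integrable {f : ℂ → ℝ} (hf : Continuous f) : CircleIntegrable f 0 1 :=
    hf.continuousOn.circleIntegrable'
  have average := Real.circleAverage_mono (c := 0) (R := 1)
    (f₁ := fun w => squareSum q (c + w * p.1) (w * p.2))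
    (f₂ := fun w => 4 * q (c + w * p.1) + η * ‖p.2‖ ^ 2)
    (integrable (by unfold squareSum; fun_prop)) (integrable (by fun_prop)) fun w hw => by
      rw [abs_one] at hw
      simpa [mem_sphere_zero_iff_norm.1 hw] using hp w hw
  simp only [squareSum, circleAverage_norm]
  simp only [squareSum] at average
  rw [Real.circleAverage_fun_add (integrable (by fun_prop)) (integrable (by fun_prop)),
    Real.circleAverage_fun_add (integrable (by fun_prop)) (integrable (by fun_prop)),
    Real.circleAverage_fun_add (integrable (by fun_prop)) (integrable (by fun_prop)),
    Real.circleAverage_fun_add (integrable (by fun_prop)) (integrable (by fun_prop)),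
    Real.circleAverage_const] at average
  rw [← smul_eq_mul 4, ← Real.circleAverage_fun_smul]
  simpa only [mul_add, mul_sub, add_assoc, add_sub_assoc, mul_assoc, smul_eq_mul] using average

theorem circleAverage_le_center {q : ℂ → ℝ} (hc : Continuous q)
    (hq : ∀ z, SquareSuperharmonicAt q z) (c : ℂ) {R : ℝ} (hR : 0 ≤ R) :
    Real.circleAverage q c R ≤ q c := by
  have := minimum_principle (isCompact_closedBall (0 : ℂ) R)
    (Continuous.continuousOn (by fun_prop))
    (fun y _ => squareSuperharmonicAt_circleAverage hc hq c y)
    (m := Real.circleAverage q c R) (fun y hy => by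
      rw [frontier_closedBall', mem_sphere_zero_iff_norm] at hy
      rw [hy])
    (mem_closedBall_self hR)
  simpa using this

end SquareSuperharmonic

section IsolatedPoint

theorem le_of_forall_pos_le_add_mul {a b c : ℝ} (h : ∀ κ > 0, a ≤ b + κ * c) : a ≤ b := by
  have limit : Tendsto (fun κ : ℝ => b + κ * c) (𝓝[>] 0) (𝓝 b) :=
    (Continuous.tendsto' (by fun_prop) _ _ (by simp)).mono_left nhdsWithin_le_nhds
  exact ge_of_tendsto limit (by filter_upwards [self_mem_nhdsWithin] with κ hκ using h κ hκ)

open Classical in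
/-- The truncation at height `N` of `q` minus a small multiple of the harmonic function
`log (‖z - o‖ / R)`. It is constant near `o`, which may thus be a singular point of `q`. -/
noncomputable def logTruncation (q : ℂ → ℝ) (o : ℂ) (R κ N : ℝ) (z : ℂ) : ℝ :=
  if z = o then N else min (q z - κ * Real.log (‖z - o‖ / R)) N

section LogTruncation

variable {q : ℂ → ℝ} {o z : ℂ} {R κ N : ℝ}

theorem logTruncation_self : logTruncation q o R κ N o = N := if_pos rfl

theorem logTruncation_of_ne (hz : z ≠ o) :
    logTruncation q o R κ N z = min (q z - κ * Real.log (‖z - o‖ / R)) N := if_neg hz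

theorem logTruncation_le_of_ne (hz : z ≠ o) :
    logTruncation q o R κ N z ≤ q z + κ * -Real.log (‖z - o‖ / R) := by
  rw [logTruncation_of_ne hz, mul_neg, ← sub_eq_add_neg]
  exact min_le_left _ _

theorem le_logTruncation {a : ℝ} (ha : a ≤ N) (h : z ≠ o → a ≤ q z) (hκ : 0 ≤ κ)
    (hz : ‖z - o‖ ≤ R) : a ≤ logTruncation q o R κ N z := by
  by_cases hzo : z = o
  · rwa [hzo, logTruncation_self]
  · have : Real.log (‖z - o‖ / R) ≤ 0 :=
      Real.log_nonpos (div_nonneg (norm_nonneg _) ((norm_nonneg _).trans hz))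
        (div_le_one_of_le₀ hz ((norm_nonneg _).trans hz))
    rw [logTruncation_of_ne hzo]
    exact le_min (by nlinarith [h hzo]) ha

theorem logTruncation_eventuallyEq_of_ne (hR : 0 < R) (hz : z ≠ o) :
    logTruncation q o R κ N =ᶠ[𝓝 z]
      fun w => min (q w + (-κ * Real.log ‖w - o‖ + κ * Real.log R)) N := by
  filter_upwards [isOpen_ne.mem_nhds hz] with w hw
  rw [logTruncation_of_ne hw, Real.log_div (norm_ne_zero_iff.2 (sub_ne_zero.2 hw)) hR.ne']
  congr 1
  ring

theorem logTruncation_eventuallyEq_self (hc : Continuous q) (hR : 0 < R) (hκ : 0 < κ) :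
    logTruncation q o R κ N =ᶠ[𝓝 o] fun _ => N := by
  have scaled : Tendsto (fun z => ‖z - o‖ / R) (𝓝[≠] o) (𝓝[>] 0) := by
    refine tendsto_nhdsWithin_iff.2 ⟨(Continuous.tendsto' (by fun_prop) _ _
      (by simp)).mono_left nhdsWithin_le_nhds, ?_⟩
    filter_upwards [self_mem_nhdsWithin] with z hz
    exact div_pos (norm_pos_iff.2 (sub_ne_zero.2 hz)) hR
  have blowup : Tendsto (fun z => q z + -κ * Real.log (‖z - o‖ / R)) (𝓝[≠] o) atTop :=
    ((hc.tendsto o).mono_left nhdsWithin_le_nhds).add_atTop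
      ((Real.tendsto_log_nhdsGT_zero.comp scaled).const_mul_atBot_of_neg (neg_neg_of_pos hκ))
  filter_upwards [eventually_nhdsWithin_iff.1 (blowup.eventually_ge_atTop N)] with z hz
  by_cases hzo : z = o
  · rw [hzo, logTruncation_self]
  · rw [logTruncation_of_ne hzo, min_eq_right]
    linarith [hz hzo]

theorem continuous_logTruncation (hc : Continuous q) (hR : 0 < R) (hκ : 0 < κ) :
    Continuous (logTruncation q o R κ N) := by
  refine continuous_iff_continuousAt.2 fun z => ?_
  by_cases hz : z = o
  · rw [hz]
    exact continuousAt_const.congr (logTruncation_eventuallyEq_self hc hR hκ).symm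
  · refine ContinuousAt.congr ?_ (logTruncation_eventuallyEq_of_ne hR hz).symm
    have : ‖z - o‖ ≠ 0 := norm_ne_zero_iff.2 (sub_ne_zero.2 hz)
    fun_prop (disch := assumption)

theorem squareSuperharmonicAt_logTruncation (hc : Continuous q)
    (hq : ∀ z ≠ o, SquareSuperharmonicAt q z) (hR : 0 < R) (hκ : 0 < κ) (z : ℂ) :
    SquareSuperharmonicAt (logTruncation q o R κ N) z := by
  by_cases hz : z = o
  · rw [hz]
    exact (squareSuperharmonicAt_const N o).congr (logTruncation_eventuallyEq_self hc hR hκ).symm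
  · refine SquareSuperharmonicAt.congr ?_ (logTruncation_eventuallyEq_of_ne hR hz).symm
    exact ((hq z hz).add ((squareSuperharmonicAt_const_mul_log_norm_sub (-κ) hz).add
      (squareSuperharmonicAt_const _ z))).min (squareSuperharmonicAt_const N z)

end LogTruncation

variable {q : ℂ → ℝ} {o : ℂ}

theorem minimum_principle_punctured (hc : Continuous q) (hq : ∀ z ≠ o, SquareSuperharmonicAt q z)
    {R m : ℝ} (hR : 0 < R) (hm : ∀ z ∈ sphere o R, m ≤ q z) {z : ℂ} (hz : z ∈ closedBall o R) :
    m ≤ q z := by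
  have off_center (w : ℂ) (hw : w ∈ closedBall o R) (hwo : w ≠ o) : m ≤ q w := by
    refine le_of_forall_pos_le_add_mul (c := -Real.log (‖w - o‖ / R)) fun κ hκ => ?_
    refine (minimum_principle (isCompact_closedBall o R)
      (continuous_logTruncation (N := m) hc hR hκ).continuousOn
      (fun z _ => squareSuperharmonicAt_logTruncation hc hq hR hκ z) (m := m)
      (fun z hz => ?_) hw).trans (logTruncation_le_of_ne hwo)
    rw [frontier_closedBall'] at hz
    exact le_logTruncation le_rfl (fun _ => hm z hz) hκ.le (mem_sphere_iff_norm.1 hz).le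
  by_cases hzo : z = o
  · have : ∀ᶠ w in 𝓝[≠] o, m ≤ q w := by
      filter_upwards [self_mem_nhdsWithin, nhdsWithin_le_nhds (closedBall_mem_nhds o hR)]
        with w hwo hw using off_center w hw hwo
    rw [hzo]
    exact ge_of_tendsto ((hc.tendsto o).mono_left nhdsWithin_le_nhds) this
  · exact off_center z hz hzo

theorem circleAverage_le_center_punctured (hc : Continuous q)
    (hq : ∀ z ≠ o, SquareSuperharmonicAt q z) {c : ℂ} (hco : c ≠ o) {R : ℝ} (hR : 0 ≤ R) :
    Real.circleAverage q c R ≤ q c := by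
  have hR' : 0 < R + ‖c - o‖ := add_pos_of_nonneg_of_pos hR (norm_pos_iff.2 (sub_ne_zero.2 hco))
  obtain ⟨N, hN⟩ := (isCompact_sphere c |R|).bddAbove_image hc.continuousOn
  refine le_of_forall_pos_le_add_mul (c := -Real.log (‖c - o‖ / (R + ‖c - o‖))) fun κ hκ => ?_
  have hg := continuous_logTruncation (N := N) (o := o) hc hR' hκ
  calc Real.circleAverage q c R
      ≤ Real.circleAverage (logTruncation q o (R + ‖c - o‖) κ N) c R := by
        refine Real.circleAverage_mono hc.continuousOn.circleIntegrable'
          hg.continuousOn.circleIntegrable' fun z hz => ?_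
        refine le_logTruncation (hN ⟨z, hz, rfl⟩) (fun _ => le_rfl) hκ.le ?_
        rw [abs_of_nonneg hR, mem_sphere_iff_norm] at hz
        exact (norm_sub_le_norm_sub_add_norm_sub z c o).trans_eq (by rw [hz])
    _ ≤ logTruncation q o (R + ‖c - o‖) κ N c :=
        circleAverage_le_center hg (squareSuperharmonicAt_logTruncation hc hq hR' hκ) c hR
    _ ≤ _ := logTruncation_le_of_ne hco

end IsolatedPoint

theorem setIntegral_ball_le_of_circleAverage_le {q : ℂ → ℝ} (hc : Continuous q) {c : ℂ} {R a : ℝ}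
    (hR : 0 ≤ R) (h : ∀ s ∈ Set.Icc 0 R, Real.circleAverage q c s ≤ a) :
    ∫ z in ball c R, q z ≤ π * R ^ 2 * a := by
  rw [setIntegral_ball_eq_integral_circleAverage hc c hR]
  calc ∫ s in (0)..R, (2 * π * s) • Real.circleAverage q c s ≤ ∫ s in (0)..R, 2 * π * s * a := by
        refine intervalIntegral.integral_mono_on hR
          (Continuous.intervalIntegrable (by fun_prop) _ _)
          (Continuous.intervalIntegrable (by fun_prop) _ _) fun s hs => ?_
        have := hs.1
        exact mul_le_mul_of_nonneg_left (h s hs) (by positivity)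
    _ = π * R ^ 2 * a := by
        rw [intervalIntegral.integral_mul_const, intervalIntegral.integral_const_mul, integral_id]
        ring

section ConformalMetric

variable {E : Type*} [NormedAddCommGroup E] [NormedSpace ℝ E]

/-- The speed of the curve `γ` in the conformal metric `e^{2u}|dz|²`. -/
noncomputable def conformalSpeed (u : E → ℝ) (γ : ℝ → E) (t : ℝ) : ℝ :=
  Real.exp (u (γ t)) * ‖deriv γ t‖

/-- A `C¹` curve which runs from `a` to `b` during the time interval `[0, 1]` and rests outside it,
so that translates of such curves can be joined without losing differentiability. -/
structure IsRestingPath (γ : ℝ → E) (a b : E) : Prop where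
  contDiff : ContDiff ℝ 1 γ
  eq_left : ∀ t ≤ 0, γ t = a
  eq_right : ∀ t, 1 ≤ t → γ t = b

/-- The lengths, in the conformal metric `e^{2u}|dz|²`, of the `C¹` curves from `a` to `b`. -/
def conformalLengths (u : E → ℝ) (a b : E) : Set ℝ :=
  {l | ∃ γ, IsRestingPath γ a b ∧ ∫ t in (0)..1, conformalSpeed u γ t = l}

/-- The distance of the conformal metric `e^{2u}|dz|²`. -/
noncomputable def conformalDist (u : E → ℝ) (a b : E) : ℝ :=
  sInf (conformalLengths u a b)

/-- The conformal metric `e^{2u}|dz|²` is complete: divergent curves have infinite length. -/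
def IsConformallyComplete (u : E → ℝ) : Prop :=
  ∀ γ : ℝ → E, ContDiffOn ℝ 1 γ (Set.Ico 0 1) → Tendsto (fun t => ‖γ t‖) (𝓝[<] 1) atTop →
    ∫⁻ t in Set.Ioo 0 1, ENNReal.ofReal (conformalSpeed u γ t) = ⊤

theorem conformalSpeed_nonneg (u : E → ℝ) (γ : ℝ → E) (t : ℝ) : 0 ≤ conformalSpeed u γ t := by
  unfold conformalSpeed
  positivity

theorem conformalSpeed_comp_sub_const (u : E → ℝ) (γ : ℝ → E) (a t : ℝ) :
    conformalSpeed u (fun s => γ (s - a)) t = conformalSpeed u γ (t - a) := by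
  rw [conformalSpeed, conformalSpeed, deriv_comp_sub_const]

theorem conformalSpeed_comp_const_sub (u : E → ℝ) (γ : ℝ → E) (a t : ℝ) :
    conformalSpeed u (fun s => γ (a - s)) t = conformalSpeed u γ (a - t) := by
  rw [conformalSpeed, conformalSpeed, deriv_comp_const_sub, norm_neg]

theorem conformalSpeed_comp (u : E → ℝ) {γ : ℝ → E} {φ : ℝ → ℝ} {t : ℝ}
    (hγ : DifferentiableAt ℝ γ (φ t)) (hφ : DifferentiableAt ℝ φ t) :
    conformalSpeed u (γ ∘ φ) t = |deriv φ t| * conformalSpeed u γ (φ t) := by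
  simp only [conformalSpeed, Function.comp, deriv.scomp t hγ hφ, norm_smul, Real.norm_eq_abs]
  ring

theorem integral_conformalSpeed_congr (u : E → ℝ) {γ₁ γ₂ : ℝ → E} {a b : ℝ} (hab : a ≤ b)
    (h : Set.EqOn γ₁ γ₂ (Set.Ioo a b)) :
    ∫ t in a..b, conformalSpeed u γ₁ t = ∫ t in a..b, conformalSpeed u γ₂ t := by
  simp only [intervalIntegral.integral_of_le hab, integral_Ioc_eq_integral_Ioo]
  refine setIntegral_congr_fun measurableSet_Ioo fun t ht => ?_
  have : γ₁ =ᶠ[𝓝 t] γ₂ := h.eventuallyEq_of_mem (Ioo_mem_nhds ht.1 ht.2)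
  simp only [conformalSpeed, this.deriv_eq, this.eq_of_nhds]

namespace IsRestingPath

variable {γ : ℝ → E} {a b : E}

theorem left (h : IsRestingPath γ a b) : γ 0 = a := h.eq_left 0 le_rfl

theorem right (h : IsRestingPath γ a b) : γ 1 = b := h.eq_right 1 le_rfl

end IsRestingPath

theorem isRestingPath_const (a : E) : IsRestingPath (fun _ => a) a a :=
  ⟨contDiff_const, fun _ _ => rfl, fun _ _ => rfl⟩

section Concatenation

/-- The concatenation of infinitely many resting paths `γ k` from `x k` to `x (k + 1)`, the `k`-th
of which is run through during the time interval `[k, k + 1]`. -/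
noncomputable def concatPaths (γ : ℕ → ℝ → E) (x : ℕ → E) (t : ℝ) : E :=
  x 0 + ∑ k ∈ Finset.range (⌊t⌋₊ + 1), (γ k (t - k) - x k)

variable {γ : ℕ → ℝ → E} {x : ℕ → E} (hγ : ∀ k, IsRestingPath (γ k) (x k) (x (k + 1)))
include hγ

theorem concatPaths_eq_sum {n : ℕ} (hn : 0 < n) {t : ℝ} (ht : t < n) :
    concatPaths γ x t = x 0 + ∑ k ∈ Finset.range n, (γ k (t - k) - x k) := by
  refine congrArg (x 0 + ·) (Finset.sum_subset ?_ ?_)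
  · exact Finset.range_subset_range.2 ((Nat.floor_lt' hn.ne').2 ht)
  · intro k _ hk
    rw [Finset.mem_range, not_lt] at hk
    have : t < k := (Nat.lt_floor_add_one t).trans_le (by exact_mod_cast hk)
    rw [(hγ k).eq_left _ (by linarith), sub_self]

theorem contDiff_concatPaths : ContDiff ℝ 1 (concatPaths γ x) := by
  refine contDiff_iff_contDiffAt.2 fun t => ?_
  obtain ⟨n, hn⟩ := exists_nat_gt (max t 0)
  rw [max_lt_iff] at hn
  have finite_sum : concatPaths γ x =ᶠ[𝓝 t]
      fun t => x 0 + ∑ k ∈ Finset.range n, (γ k (t - k) - x k) := by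
    filter_upwards [Iio_mem_nhds hn.1] with s hs
    exact concatPaths_eq_sum hγ (by exact_mod_cast hn.2) hs
  refine ContDiffAt.congr_of_eventuallyEq ?_ finite_sum
  refine contDiffAt_const.add (ContDiffAt.sum fun k _ => ?_)
  exact (((hγ k).contDiff.comp (by fun_prop : ContDiff ℝ 1 fun t : ℝ => t - k)).sub
    contDiff_const).contDiffAt

theorem concatPaths_eq {n : ℕ} {t : ℝ} (hnt : n ≤ t) (htn : t < n + 1) :
    concatPaths γ x t = γ n (t - n) := by
  rw [concatPaths_eq_sum hγ n.succ_pos (by push_cast; exact htn), Finset.sum_range_succ]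
  have completed : ∑ k ∈ Finset.range n, (γ k (t - k) - x k) =
      ∑ k ∈ Finset.range n, (x (k + 1) - x k) := by
    refine Finset.sum_congr rfl fun k hk => ?_
    have : (k : ℝ) + 1 ≤ n := by exact_mod_cast Finset.mem_range.1 hk
    rw [(hγ k).eq_right _ (by linarith)]
  rw [completed, Finset.sum_range_sub]
  abel

theorem concatPaths_natCast (n : ℕ) : concatPaths γ x n = x n := by
  rw [concatPaths_eq hγ le_rfl (lt_add_one _), sub_self, (hγ n).left]

end Concatenation

variable {u : E → ℝ}

section ContinuousFactor

variable (hu : Continuous u)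
include hu

theorem continuous_conformalSpeed {γ : ℝ → E} (hγ : ContDiff ℝ 1 γ) :
    Continuous (conformalSpeed u γ) := by
  have := hγ.continuous
  have := hγ.continuous_deriv le_rfl
  unfold conformalSpeed
  fun_prop

theorem intervalIntegrable_conformalSpeed {γ : ℝ → E} (hγ : ContDiff ℝ 1 γ) (a b : ℝ) :
    IntervalIntegrable (conformalSpeed u γ) volume a b :=
  (continuous_conformalSpeed hu hγ).intervalIntegrable a b

theorem integral_conformalSpeed_mono_interval {γ : ℝ → E} (hγ : ContDiff ℝ 1 γ) {a b c d : ℝ}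
    (hca : c ≤ a) (hab : a ≤ b) (hbd : b ≤ d) :
    ∫ t in a..b, conformalSpeed u γ t ≤ ∫ t in c..d, conformalSpeed u γ t :=
  intervalIntegral.integral_mono_interval hca hab hbd
    (ae_of_all _ fun t => conformalSpeed_nonneg u γ t) (intervalIntegrable_conformalSpeed hu hγ c d)

theorem integral_conformalSpeed_concatPaths {γ : ℕ → ℝ → E} {x : ℕ → E}
    (hγ : ∀ k, IsRestingPath (γ k) (x k) (x (k + 1))) (n : ℕ) :
    ∫ t in (0)..n, conformalSpeed u (concatPaths γ x) t =
      ∑ k ∈ Finset.range n, ∫ t in (0)..1, conformalSpeed u (γ k) t := by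
  have split := intervalIntegral.sum_integral_adjacent_intervals (n := n)
    (a := fun k : ℕ => (k : ℝ))
    fun k _ => intervalIntegrable_conformalSpeed hu (contDiff_concatPaths hγ) k (k + 1 : ℕ)
  rw [Nat.cast_zero] at split
  rw [← split]
  refine Finset.sum_congr rfl fun k _ => ?_
  push_cast
  rw [integral_conformalSpeed_congr u (γ₂ := fun t => γ k (t - k))
    (le_add_of_nonneg_right zero_le_one) fun t ht => concatPaths_eq hγ ht.1.le ht.2]
  simp only [conformalSpeed_comp_sub_const]
  rw [intervalIntegral.integral_comp_sub_right, sub_self, add_sub_cancel_left]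

theorem integral_conformalSpeed_comp {γ : ℝ → E} (hγ : ContDiff ℝ 1 γ) {φ : ℝ → ℝ} {a b : ℝ}
    (hφ : ContDiff ℝ 1 φ) (hmono : Monotone φ) :
    ∫ t in a..b, conformalSpeed u (γ ∘ φ) t = ∫ t in φ a..φ b, conformalSpeed u γ t := by
  rw [← intervalIntegral.integral_comp_mul_deriv
    (fun t _ => (hφ.differentiable one_ne_zero t).hasDerivAt)
    (hφ.continuous_deriv le_rfl).continuousOn (continuous_conformalSpeed hu hγ)]
  refine intervalIntegral.integral_congr fun t _ => ?_
  simp only [conformalSpeed_comp u (hγ.differentiable one_ne_zero _)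
    (hφ.differentiable one_ne_zero t), abs_of_nonneg hmono.deriv_nonneg, Function.comp, mul_comm]

theorem integral_conformalSpeed_mem_conformalLengths {γ : ℝ → E} (hγ : ContDiff ℝ 1 γ) {a b : ℝ}
    (hab : a ≤ b) :
    ∫ t in a..b, conformalSpeed u γ t ∈ conformalLengths u (γ a) (γ b) := by
  let φ (t : ℝ) : ℝ := a + (b - a) * Real.smoothTransition t
  have hφ : ContDiff ℝ 1 φ := contDiff_const.add (contDiff_const.mul Real.smoothTransition.contDiff)
  have hmono : Monotone φ := fun s t hst => add_le_add_right
    (mul_le_mul_of_nonneg_left (Real.smoothTransition.monotone hst) (sub_nonneg.2 hab)) a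
  have hleft (t : ℝ) (ht : t ≤ 0) : φ t = a := by simp [φ, Real.smoothTransition.zero_of_nonpos ht]
  have hright (t : ℝ) (ht : 1 ≤ t) : φ t = b := by simp [φ, Real.smoothTransition.one_of_one_le ht]
  refine ⟨γ ∘ φ, ⟨hγ.comp hφ, fun t ht => by simp [hleft t ht], fun t ht => by simp [hright t ht]⟩,
    ?_⟩
  rw [integral_conformalSpeed_comp hu hγ hφ hmono, hleft 0 le_rfl, hright 1 le_rfl]

omit hu in
theorem conformalLengths_nonneg {a b : E} {l : ℝ} (hl : l ∈ conformalLengths u a b) : 0 ≤ l := by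
  obtain ⟨γ, -, rfl⟩ := hl
  exact intervalIntegral.integral_nonneg zero_le_one fun t _ => conformalSpeed_nonneg u γ t

omit hu in
theorem conformalDist_nonneg (u : E → ℝ) (a b : E) : 0 ≤ conformalDist u a b :=
  Real.sInf_nonneg fun _ hl => conformalLengths_nonneg hl

theorem conformalDist_le_integral {γ : ℝ → E} (hγ : ContDiff ℝ 1 γ) {a b : ℝ} (hab : a ≤ b) :
    conformalDist u (γ a) (γ b) ≤ ∫ t in a..b, conformalSpeed u γ t :=
  csInf_le ⟨0, fun _ hl => conformalLengths_nonneg hl⟩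
    (integral_conformalSpeed_mem_conformalLengths hu hγ hab)

theorem exists_isRestingPath_lt {a b : E} {l : ℝ} (h : conformalDist u a b < l) :
    ∃ γ, IsRestingPath γ a b ∧ ∫ t in (0)..1, conformalSpeed u γ t < l := by
  have line : ContDiff ℝ 1 fun t : ℝ => a + t • (b - a) := by fun_prop
  have nonempty : (conformalLengths u a b).Nonempty :=
    ⟨_, by simpa using integral_conformalSpeed_mem_conformalLengths hu line zero_le_one⟩
  obtain ⟨_, ⟨γ, hγ, rfl⟩, hlt⟩ := exists_lt_of_csInf_lt nonempty h
  exact ⟨γ, hγ, hlt⟩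

theorem IsRestingPath.conformalDist_left_le {γ : ℝ → E} {a b : E} (hγ : IsRestingPath γ a b)
    {t : ℝ} (ht : 0 ≤ t) : conformalDist u a (γ t) ≤ ∫ s in (0)..t, conformalSpeed u γ s := by
  simpa only [hγ.left] using conformalDist_le_integral hu hγ.contDiff ht

theorem IsRestingPath.conformalDist_right_le {γ : ℝ → E} {a b : E} (hγ : IsRestingPath γ a b)
    {t : ℝ} (ht : t ≤ 1) : conformalDist u (γ t) b ≤ ∫ s in t..1, conformalSpeed u γ s := by
  simpa only [hγ.right] using conformalDist_le_integral hu hγ.contDiff ht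

theorem conformalDist_le_mul_norm {a b : E} {M : ℝ}
    (hM : ∀ z ∈ segment ℝ a b, Real.exp (u z) ≤ M) : conformalDist u a b ≤ M * ‖b - a‖ := by
  have line : ContDiff ℝ 1 fun t : ℝ => a + t • (b - a) := by fun_prop
  have speed (t : ℝ) (ht : t ∈ Set.Icc (0 : ℝ) 1) :
      conformalSpeed u (fun t : ℝ => a + t • (b - a)) t ≤ M * ‖b - a‖ := by
    have hderiv : HasDerivAt (fun t : ℝ => a + t • (b - a)) (b - a) t := by
      simpa using ((hasDerivAt_id t).smul_const (b - a)).const_add a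
    rw [conformalSpeed, hderiv.deriv]
    gcongr
    exact hM _ (segment_eq_image' ℝ a b ▸ ⟨t, ht, rfl⟩)
  have length := conformalDist_le_integral hu line zero_le_one
  simp only [zero_smul, add_zero, one_smul, add_sub_cancel] at length
  refine length.trans ((intervalIntegral.integral_mono_on zero_le_one
    (intervalIntegrable_conformalSpeed hu line 0 1) intervalIntegrable_const speed).trans_eq ?_)
  simp

theorem conformalDist_self (a : E) : conformalDist u a a = 0 := by
  refine le_antisymm ?_ (conformalDist_nonneg u a a)
  simpa using conformalDist_le_mul_norm hu (a := a) (b := a) (M := Real.exp (u a))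
    (by simp [segment_same])

theorem conformalDist_comm (a b : E) : conformalDist u a b = conformalDist u b a := by
  have reverse (a b : E) : conformalDist u b a ≤ conformalDist u a b := by
    refine le_of_forall_gt fun l hl => ?_
    obtain ⟨γ, hγ, hlt⟩ := exists_isRestingPath_lt hu hl
    have length := conformalDist_le_integral hu
      (hγ.contDiff.comp (by fun_prop : ContDiff ℝ 1 fun t : ℝ => 1 - t)) zero_le_one
    simp only [Function.comp_def, conformalSpeed_comp_const_sub, sub_zero, sub_self, hγ.left,
      hγ.right, intervalIntegral.integral_comp_sub_left] at length
    exact length.trans_lt hlt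
  exact le_antisymm (reverse b a) (reverse a b)

theorem conformalDist_triangle (a b c : E) :
    conformalDist u a c ≤ conformalDist u a b + conformalDist u b c := by
  refine le_of_forall_pos_le_add fun ε hε => ?_
  obtain ⟨γ₁, h₁, hlt₁⟩ := exists_isRestingPath_lt hu
    (lt_add_of_pos_right (conformalDist u a b) (half_pos hε))
  obtain ⟨γ₂, h₂, hlt₂⟩ := exists_isRestingPath_lt hu
    (lt_add_of_pos_right (conformalDist u b c) (half_pos hε))
  let x : ℕ → E | 0 => a | 1 => b | _ => c
  let γ : ℕ → ℝ → E | 0 => γ₁ | 1 => γ₂ | _ => fun _ => c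
  have hγ : ∀ k, IsRestingPath (γ k) (x k) (x (k + 1))
    | 0 => h₁
    | 1 => h₂
    | _ + 2 => isRestingPath_const c
  have length := conformalDist_le_integral hu (contDiff_concatPaths hγ)
    (Nat.cast_nonneg (α := ℝ) 2)
  rw [← Nat.cast_zero, concatPaths_natCast hγ, concatPaths_natCast hγ, Nat.cast_zero,
    integral_conformalSpeed_concatPaths hu hγ] at length
  simp only [Finset.sum_range_succ, Finset.range_zero, Finset.sum_empty, zero_add] at length
  change conformalDist u a c ≤ (∫ t in (0)..1, conformalSpeed u γ₁ t) +
    ∫ t in (0)..1, conformalSpeed u γ₂ t at length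
  linarith

theorem tendsto_conformalDist_self (a : E) : Tendsto (conformalDist u a) (𝓝 a) (𝓝 0) := by
  have bounded : ∀ᶠ z in 𝓝 a, Real.exp (u z) ≤ Real.exp (u a) + 1 :=
    (Continuous.tendsto (by fun_prop) a).eventually_le_const (lt_add_one _)
  obtain ⟨δ, hδ, hball⟩ := eventually_nhds_iff_ball.1 bounded
  have upper : ∀ᶠ z in 𝓝 a, conformalDist u a z ≤ (Real.exp (u a) + 1) * ‖z - a‖ := by
    filter_upwards [ball_mem_nhds a hδ] with z hz
    exact conformalDist_le_mul_norm hu fun w hw =>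
      hball w ((convex_ball a δ).segment_subset (mem_ball_self hδ) hz hw)
  exact tendsto_of_tendsto_of_tendsto_of_le_of_le' tendsto_const_nhds
    (Continuous.tendsto' (by fun_prop) _ _ (by simp))
    (.of_forall fun z => conformalDist_nonneg u a z) upper

theorem continuous_conformalDist (o : E) : Continuous (conformalDist u o) := by
  refine continuous_iff_continuousAt.2 fun z => tendsto_iff_dist_tendsto_zero.2
    (squeeze_zero (fun _ => dist_nonneg) (fun w => ?_) (tendsto_conformalDist_self hu z))
  have := conformalDist_triangle hu o w z
  rw [conformalDist_comm hu w z] at this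
  exact abs_le.2 ⟨by linarith, by linarith [conformalDist_triangle hu o z w]⟩

theorem exists_conformalDist_le_and_lt {a b : E} {s l : ℝ} (hs : 0 ≤ s)
    (hsl : s ≤ conformalDist u a b) (hl : conformalDist u a b < l) :
    ∃ p, conformalDist u a p ≤ s ∧ conformalDist u p b < l - s := by
  obtain ⟨γ, hγ, hlt⟩ := exists_isRestingPath_lt hu hl
  have integrable := intervalIntegrable_conformalSpeed hu hγ.contDiff
  have total := hγ.conformalDist_left_le hu zero_le_one
  rw [hγ.right] at total
  obtain ⟨t, ht, hts⟩ := intermediate_value_Icc (zero_le_one (α := ℝ))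
    (intervalIntegral.continuous_primitive integrable 0).continuousOn
    (show s ∈ Set.Icc _ _ from ⟨by simpa using hs, hsl.trans total⟩)
  have split := intervalIntegral.integral_add_adjacent_intervals (integrable 0 t) (integrable t 1)
  exact ⟨γ t, (hγ.conformalDist_left_le hu ht.1).trans_eq hts,
    (hγ.conformalDist_right_le hu ht.2).trans_lt (by linarith)⟩

theorem exists_mem_sphere_conformalDist_le [Nontrivial E] [ProperSpace E] (o : E) {r : ℝ}
    (hr : 0 ≤ r) :
    ∃ y ∈ sphere o r, ∀ z, r ≤ ‖z - o‖ → conformalDist u o y ≤ conformalDist u o z := by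
  obtain ⟨y, hy, hmin⟩ := (isCompact_sphere o r).exists_isMinOn (NormedSpace.sphere_nonempty.2 hr)
    (continuous_conformalDist hu o).continuousOn
  refine ⟨y, hy, fun z hz => le_of_forall_gt fun l hl => ?_⟩
  obtain ⟨γ, hγ, hlt⟩ := exists_isRestingPath_lt hu hl
  obtain ⟨t, ht, hcross⟩ := intermediate_value_Icc (zero_le_one (α := ℝ))
    (hγ.contDiff.continuous.sub continuous_const).norm.continuousOn
    (show r ∈ Set.Icc ‖γ 0 - o‖ ‖γ 1 - o‖ by simpa [hγ.left, hγ.right] using ⟨hr, hz⟩)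
  calc conformalDist u o y ≤ conformalDist u o (γ t) := hmin (mem_sphere_iff_norm.2 hcross)
    _ ≤ ∫ s in (0)..t, conformalSpeed u γ s := hγ.conformalDist_left_le hu ht.1
    _ ≤ ∫ s in (0)..1, conformalSpeed u γ s :=
        integral_conformalSpeed_mono_interval hu hγ.contDiff le_rfl ht.1 ht.2
    _ < l := hlt

variable [CompleteSpace E]

theorem mul_norm_sub_le_integral_conformalSpeed {γ : ℝ → E} (hγ : ContDiff ℝ 1 γ) {M a b : ℝ}
    (hM : 0 ≤ M) (hab : a ≤ b) (hlow : ∀ t ∈ Set.Ioo a b, M ≤ Real.exp (u (γ t))) :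
    M * ‖γ b - γ a‖ ≤ ∫ t in a..b, conformalSpeed u γ t := by
  have hγ' : Continuous (deriv γ) := hγ.continuous_deriv le_rfl
  calc M * ‖γ b - γ a‖ = M * ‖∫ t in a..b, deriv γ t‖ := by
        rw [intervalIntegral.integral_deriv_eq_sub
          (fun t _ => hγ.differentiable one_ne_zero t) (hγ'.intervalIntegrable _ _)]
    _ ≤ M * ∫ t in a..b, ‖deriv γ t‖ :=
        mul_le_mul_of_nonneg_left (intervalIntegral.norm_integral_le_integral_norm hab) hM
    _ = ∫ t in a..b, M * ‖deriv γ t‖ := by rw [intervalIntegral.integral_const_mul]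
    _ ≤ ∫ t in a..b, conformalSpeed u γ t :=
        intervalIntegral.integral_mono_on_of_le_Ioo hab
          ((continuous_const.mul hγ'.norm).intervalIntegrable _ _)
          (intervalIntegrable_conformalSpeed hu hγ a b)
          fun t ht => mul_le_mul_of_nonneg_right (hlow t ht) (norm_nonneg _)

theorem mul_le_integral_conformalSpeed {γ : ℝ → E} (hγ : ContDiff ℝ 1 γ) {ρ M t₀ : ℝ}
    (ht₀ : 0 ≤ t₀) (hM : 0 ≤ M) (hlow : ∀ z ∈ closedBall (γ 0) ρ, M ≤ Real.exp (u z))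
    (hfar : ρ ≤ ‖γ t₀ - γ 0‖) : M * ρ ≤ ∫ t in (0)..t₀, conformalSpeed u γ t := by
  have compact : IsCompact (Set.Icc 0 t₀ ∩ {t | ρ ≤ ‖γ t - γ 0‖}) :=
    isCompact_Icc.inter_right
      (isClosed_le continuous_const (hγ.continuous.sub continuous_const).norm)
  obtain ⟨t₁, ⟨⟨ht₁, ht₁₀⟩, hexit⟩, hleast⟩ := compact.exists_isLeast ⟨t₀, ⟨ht₀, le_rfl⟩, hfar⟩
  have inside (t : ℝ) (ht : t ∈ Set.Ioo 0 t₁) : γ t ∈ closedBall (γ 0) ρ := by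
    by_contra hout
    rw [mem_closedBall_iff_norm, not_le] at hout
    exact (hleast ⟨⟨ht.1.le, ht.2.le.trans ht₁₀⟩, hout.le⟩).not_gt ht.2
  calc M * ρ ≤ M * ‖γ t₁ - γ 0‖ := mul_le_mul_of_nonneg_left hexit hM
    _ ≤ ∫ t in (0)..t₁, conformalSpeed u γ t :=
        mul_norm_sub_le_integral_conformalSpeed hu hγ hM ht₁ fun t ht => hlow _ (inside t ht)
    _ ≤ ∫ t in (0)..t₀, conformalSpeed u γ t :=
        integral_conformalSpeed_mono_interval hu hγ le_rfl ht₁ ht₁₀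

theorem mul_le_conformalDist {a b : E} {ρ M : ℝ} (hM : 0 ≤ M)
    (hlow : ∀ z ∈ closedBall a ρ, M ≤ Real.exp (u z)) (hfar : ρ ≤ ‖b - a‖) :
    M * ρ ≤ conformalDist u a b := by
  refine le_of_forall_gt fun l hl => ?_
  obtain ⟨γ, hγ, hlt⟩ := exists_isRestingPath_lt hu hl
  refine (mul_le_integral_conformalSpeed hu hγ.contDiff zero_le_one hM ?_ ?_).trans_lt hlt
  · rwa [hγ.left]
  · rwa [hγ.left, hγ.right]

end ContinuousFactor

end ConformalMetric

section HopfRinow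

variable {E : Type*} [NormedAddCommGroup E] [NormedSpace ℝ E] {u : E → ℝ}

theorem exists_seq_of_forall_exists_succ {α : Type*} {p : ℕ → α → Prop} {r : ℕ → α → α → Prop}
    {a : α} (ha : p 0 a) (step : ∀ k a, p k a → ∃ b, p (k + 1) b ∧ r k a b) :
    ∃ x : ℕ → α, (∀ k, p k (x k)) ∧ ∀ k, r k (x k) (x (k + 1)) := by
  choose next hp hr using step
  let s (k : ℕ) : {a // p k a} := Nat.rec ⟨a, ha⟩ (fun k a => ⟨next k a a.2, hp k a a.2⟩) k
  refine ⟨fun k => (s k).1, fun k => (s k).2, fun k => ?_⟩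
  exact hr k (s k).1 (s k).2

theorem hasDerivAt_div_one_sub {t : ℝ} (ht : t ≠ 1) :
    HasDerivAt (fun t : ℝ => t / (1 - t)) ((1 - t) ^ 2)⁻¹ t := by
  have h : 1 - t ≠ 0 := sub_ne_zero.2 ht.symm
  refine ((hasDerivAt_id t).div ((hasDerivAt_id t).const_sub 1) h).congr_deriv ?_
  simp only [id]
  field_simp
  ring

theorem contDiffOn_div_one_sub : ContDiffOn ℝ 1 (fun t : ℝ => t / (1 - t)) (Set.Iio 1) :=
  contDiffOn_id.div (contDiffOn_const.sub contDiffOn_id) fun _ ht => sub_ne_zero.2 (ne_of_gt ht)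

theorem tendsto_div_one_sub : Tendsto (fun t : ℝ => t / (1 - t)) (𝓝[<] 1) atTop := by
  have denominator : Tendsto (fun t : ℝ => 1 - t) (𝓝[<] 1) (𝓝[>] 0) := by
    refine tendsto_nhdsWithin_iff.2 ⟨?_, ?_⟩
    · exact (Continuous.tendsto' (by fun_prop) _ _ (sub_self 1)).mono_left nhdsWithin_le_nhds
    · filter_upwards [self_mem_nhdsWithin] with t ht using sub_pos.2 (Set.mem_Iio.1 ht)
  exact Tendsto.pos_mul_atTop one_pos (tendsto_id.mono_left nhdsWithin_le_nhds)
    (tendsto_inv_nhdsGT_zero.comp denominator)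

theorem bijOn_div_one_sub :
    Set.BijOn (fun t : ℝ => t / (1 - t)) (Set.Ioo 0 1) (Set.Ioi 0) := by
  refine Set.InvOn.bijOn (f' := fun s => s / (1 + s)) ⟨fun t ht => ?_, fun s hs => ?_⟩
    (fun t ht => div_pos ht.1 (sub_pos.2 ht.2)) fun s hs => ?_
  · have : 1 - t ≠ 0 := (sub_pos.2 ht.2).ne'
    simp only
    field_simp
    ring
  · have : 1 + s ≠ 0 := (add_pos one_pos (Set.mem_Ioi.1 hs)).ne'
    simp only
    field_simp
    ring
  · rw [Set.mem_Ioi] at hs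
    exact ⟨by positivity, (div_lt_one (by positivity)).2 (by linarith)⟩

theorem IsConformallyComplete.lintegral_Ioi_eq_top (hcomp : IsConformallyComplete u) {γ : ℝ → E}
    (hγ : ContDiff ℝ 1 γ) (hlim : Tendsto (fun t => ‖γ t‖) atTop atTop) :
    ∫⁻ t in Set.Ioi 0, ENNReal.ofReal (conformalSpeed u γ t) = ⊤ := by
  let φ (t : ℝ) : ℝ := t / (1 - t)
  have hφ (t : ℝ) (ht : t ∈ Set.Ioo (0 : ℝ) 1) : HasDerivAt φ ((1 - t) ^ 2)⁻¹ t :=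
    hasDerivAt_div_one_sub ht.2.ne
  have infinite : ∫⁻ t in Set.Ioo 0 1, ENNReal.ofReal (conformalSpeed u (γ ∘ φ) t) = ⊤ :=
    hcomp (γ ∘ φ) (hγ.comp_contDiffOn (contDiffOn_div_one_sub.mono Set.Ico_subset_Iio_self))
      (hlim.comp tendsto_div_one_sub)
  rw [← bijOn_div_one_sub.image_eq, lintegral_image_eq_lintegral_abs_deriv_mul measurableSet_Ioo
    (fun t ht => (hφ t ht).hasDerivWithinAt) bijOn_div_one_sub.injOn, ← infinite]
  refine setLIntegral_congr_fun measurableSet_Ioo fun t ht => ?_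
  rw [conformalSpeed_comp u (hγ.differentiable one_ne_zero _) (hφ t ht).differentiableAt,
    ENNReal.ofReal_mul (abs_nonneg _), (hφ t ht).deriv]

theorem IsConformallyComplete.not_forall_integral_le (hcomp : IsConformallyComplete u)
    (hu : Continuous u) {γ : ℝ → E} (hγ : ContDiff ℝ 1 γ)
    (hlim : Tendsto (fun t => ‖γ t‖) atTop atTop) (L : ℝ) :
    ¬ ∀ n : ℕ, ∫ t in (0)..n, conformalSpeed u γ t ≤ L := by
  intro hL
  have integrable : IntegrableOn (conformalSpeed u γ) (Set.Ioi 0) := by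
    refine integrableOn_Ioi_of_intervalIntegral_norm_bounded L 0
      (fun n : ℕ => (intervalIntegrable_conformalSpeed hu hγ 0 n).1)
      tendsto_natCast_atTop_atTop (.of_forall fun n => ?_)
    simpa only [Real.norm_of_nonneg (conformalSpeed_nonneg u γ _)] using hL n
  exact integrable.lintegral_lt_top.ne (hcomp.lintegral_Ioi_eq_top hγ hlim)

variable [ProperSpace E]

theorem exists_conformalDist_lt_and_not_isBounded (hu : Continuous u) {a : E} {L : ℝ}
    (hL : 0 < L) (hunb : ¬ Bornology.IsBounded {y | conformalDist u a y < L}) :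
    ∃ b, conformalDist u a b < L ∧
      ¬ Bornology.IsBounded {y | conformalDist u b y < 3 / 4 * L} := by
  by_cases hsmall : Bornology.IsBounded {y | conformalDist u a y < 3 / 4 * L}
  swap
  · exact ⟨a, by rwa [conformalDist_self hu], hsmall⟩
  obtain ⟨R, hR⟩ := hsmall.exists_norm_le
  have far_point (n : ℕ) : ∃ y, conformalDist u a y < L ∧ max (n : ℝ) R < ‖y‖ := by
    by_contra! hcon
    exact hunb (isBounded_iff_forall_norm_le.2 ⟨_, hcon⟩)
  choose y hyL hyn using far_point
  have hyR (n : ℕ) : 3 / 4 * L ≤ conformalDist u a (y n) :=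
    not_lt.1 fun hlt => (hR _ hlt).not_gt ((le_max_right _ _).trans_lt (hyn n))
  choose p hap hpy using fun n => exists_conformalDist_le_and_lt hu (half_pos hL).le
    (show L / 2 ≤ conformalDist u a (y n) by linarith [hyR n]) (hyL n)
  have hpR (n : ℕ) : p n ∈ closedBall (0 : E) R :=
    mem_closedBall_zero_iff.2 (hR _ (show conformalDist u a (p n) < _ by linarith [hap n]))
  obtain ⟨b, -, φ, hφ, hlim⟩ := (isCompact_closedBall (0 : E) R).tendsto_subseq hpR
  refine ⟨b, ?_, fun hb => ?_⟩
  · exact (le_of_tendsto (((continuous_conformalDist hu a).tendsto b).comp hlim)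
      (.of_forall fun n => hap (φ n))).trans_lt (half_lt_self hL)
  · obtain ⟨S, hS⟩ := hb.exists_norm_le
    have near : ∀ᶠ n in atTop, conformalDist u b (p (φ n)) < L / 4 :=
      ((tendsto_conformalDist_self hu b).comp hlim).eventually_lt_const (by linarith)
    have large : ∀ᶠ n in atTop, S ≤ φ n :=
      (tendsto_natCast_atTop_atTop.comp hφ.tendsto_atTop).eventually_ge_atTop S
    obtain ⟨n, hn, hSn⟩ := (near.and large).exists
    have hby : conformalDist u b (y (φ n)) < 3 / 4 * L := by
      linarith [conformalDist_triangle hu b (p (φ n)) (y (φ n)), hpy (φ n)]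
    linarith [hS _ hby, (le_max_left (φ n : ℝ) R).trans_lt (hyn (φ n))]

theorem tendsto_norm_of_not_isBounded (hu : Continuous u) {ι : Type*} {l : Filter ι}
    {x w : ι → E} {ρ : ι → ℝ} (hρ : Tendsto ρ l (𝓝 0))
    (hunb : ∀ i, ¬ Bornology.IsBounded {y | conformalDist u (x i) y < ρ i})
    (hw : ∀ᶠ i in l, conformalDist u (x i) (w i) < ρ i) :
    Tendsto (fun i => ‖w i‖) l atTop := by
  refine tendsto_atTop.2 fun R => ?_
  obtain hneg | hR := lt_or_ge R 0
  · exact .of_forall fun i => hneg.le.trans (norm_nonneg _)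
  obtain ⟨z₀, -, hmin⟩ := (isCompact_closedBall (0 : E) (R + 1)).exists_isMinOn
    ⟨0, mem_closedBall_self (by positivity)⟩ (f := fun z => Real.exp (u z)) (by fun_prop)
  filter_upwards [hw, hρ.eventually_lt_const (half_pos (Real.exp_pos (u z₀)))] with i hi hsmall
  by_contra! hwR
  refine hunb i ((isBounded_ball (x := w i) (r := 1)).subset fun y hy => ?_)
  by_contra hyw
  have hball : closedBall (w i) 1 ⊆ closedBall 0 (R + 1) :=
    closedBall_subset_closedBall' (by rw [dist_zero_right]; linarith)
  have escape : Real.exp (u z₀) * 1 ≤ conformalDist u (w i) y :=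
    mul_le_conformalDist hu (Real.exp_pos _).le (fun z hz => hmin (hball hz))
      (by simpa [dist_eq_norm] using hyw)
  have hxy : conformalDist u (x i) y < ρ i := hy
  linarith [conformalDist_triangle hu (w i) (x i) y, conformalDist_comm hu (w i) (x i)]

theorem exists_seq_not_isBounded (hu : Continuous u) {o : E} {L : ℝ} (hL : 0 < L)
    (hunb : ¬ Bornology.IsBounded {y | conformalDist u o y < L}) :
    ∃ x : ℕ → E, (∀ k, ¬ Bornology.IsBounded {y | conformalDist u (x k) y < (3 / 4) ^ k * L}) ∧
      ∀ k, conformalDist u (x k) (x (k + 1)) < (3 / 4) ^ k * L := by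
  refine exists_seq_of_forall_exists_succ (a := o)
    (p := fun k a => ¬ Bornology.IsBounded {y | conformalDist u a y < (3 / 4) ^ k * L})
    (r := fun k a b => conformalDist u a b < (3 / 4) ^ k * L) (by simpa using hunb) fun k a ha => ?_
  obtain ⟨b, hab, hb⟩ := exists_conformalDist_lt_and_not_isBounded hu (by positivity) ha
  exact ⟨b, by rwa [pow_succ', mul_assoc], hab⟩

/- Hopf and Rinow: if a disc were unbounded, then so would be discs of radii `(3/4) ^ k * L` around
consecutive points at distances less than these radii; joining the points gives a divergent curve
of finite length. -/
theorem IsConformallyComplete.isBounded_conformalDist_lt (hcomp : IsConformallyComplete u)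
    (hu : Continuous u) (o : E) (L : ℝ) : Bornology.IsBounded {y | conformalDist u o y < L} := by
  obtain hL | hL := le_or_gt L 0
  · refine Bornology.isBounded_empty.subset fun y hy => ?_
    exact absurd (hy.trans_le hL) (conformalDist_nonneg u o y).not_gt
  by_contra hunb
  obtain ⟨x, hx, hdist⟩ := exists_seq_not_isBounded hu hL hunb
  choose γ hγ hlength using fun k => exists_isRestingPath_lt hu (hdist k)
  have radii : Tendsto (fun k : ℕ => (3 / 4 : ℝ) ^ k * L) atTop (𝓝 0) := by
    simpa using (tendsto_pow_atTop_nhds_zero_of_lt_one (by norm_num) (by norm_num)).mul_const L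
  have near : ∀ᶠ t : ℝ in atTop,
      conformalDist u (x ⌊t⌋₊) (concatPaths γ x t) < (3 / 4) ^ ⌊t⌋₊ * L := by
    filter_upwards [eventually_ge_atTop 0] with t ht
    have hle := Nat.floor_le ht
    have hlt := Nat.lt_floor_add_one t
    rw [concatPaths_eq hγ hle hlt]
    calc conformalDist u (x ⌊t⌋₊) (γ ⌊t⌋₊ (t - ⌊t⌋₊))
        ≤ ∫ s in (0)..t - ⌊t⌋₊, conformalSpeed u (γ ⌊t⌋₊) s :=
          (hγ _).conformalDist_left_le hu (sub_nonneg.2 hle)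
      _ ≤ ∫ s in (0)..1, conformalSpeed u (γ ⌊t⌋₊) s :=
          integral_conformalSpeed_mono_interval hu (hγ _).contDiff le_rfl (sub_nonneg.2 hle)
            (by linarith)
      _ < (3 / 4) ^ ⌊t⌋₊ * L := hlength _
  have diverges : Tendsto (fun t => ‖concatPaths γ x t‖) atTop atTop :=
    tendsto_norm_of_not_isBounded hu (radii.comp tendsto_nat_floor_atTop) (fun t => hx ⌊t⌋₊) near
  refine hcomp.not_forall_integral_le hu (contDiff_concatPaths hγ) diverges (4 * L) fun n => ?_
  calc ∫ t in (0)..n, conformalSpeed u (concatPaths γ x) t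
      = ∑ k ∈ Finset.range n, ∫ t in (0)..1, conformalSpeed u (γ k) t :=
        integral_conformalSpeed_concatPaths hu hγ n
    _ ≤ ∑ k ∈ Finset.range n, (3 / 4 : ℝ) ^ k * L := Finset.sum_le_sum fun k _ => (hlength k).le
    _ = 4 * L - 4 * ((3 / 4 : ℝ) ^ n * L) := by
        rw [← Finset.sum_mul, geom_sum_eq (by norm_num)]
        ring
    _ ≤ 4 * L := sub_le_self _ (by positivity)

end HopfRinow

section SecondVariation

open Asymptotics

section Expansion

variable {E F : Type*} [NormedAddCommGroup E] [NormedSpace ℝ E] [NormedAddCommGroup F]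
  [NormedSpace ℝ F]

theorem isLittleO_add_sub_sub_fderiv {f : E → F} (hf : ContDiff ℝ 1 f) (x₀ : E) :
    (fun q : E × E => f (q.1 + q.2) - f q.1 - fderiv ℝ f q.1 q.2) =o[𝓝 (x₀, 0)] Prod.snd := by
  have := hf.continuous_fderiv one_ne_zero
  have strict := (hf.contDiffAt.hasStrictFDerivAt (x := x₀) one_ne_zero).isLittleO.comp_tendsto
    (Continuous.tendsto' (f := fun q : E × E => (q.1 + q.2, q.1)) (by fun_prop) (x₀, 0) _ (by simp))
  have vanishing : (fun q : E × E => ‖fderiv ℝ f q.1 - fderiv ℝ f x₀‖) =o[𝓝 (x₀, 0)]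
      fun _ => (1 : ℝ) :=
    (isLittleO_one_iff ℝ).2 (Continuous.tendsto' (by fun_prop) _ _ (by simp))
  have variation : (fun q : E × E => (fderiv ℝ f q.1 - fderiv ℝ f x₀) q.2) =o[𝓝 (x₀, 0)]
      Prod.snd := by
    refine IsLittleO.of_norm_right (IsBigO.trans_isLittleO (isBigO_of_le _ fun q => ?_)
      ((vanishing.mul_isBigO (isBigO_refl (fun q : E × E => ‖q.2‖) _)).congr_right
        fun q => one_mul _))
    rw [norm_mul, norm_norm, norm_norm]
    exact ContinuousLinearMap.le_opNorm _ _
  refine (IsLittleO.sub (strict.congr_right fun q => by simp) variation).congr_left fun q => ?_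
  simp

theorem isLittleO_log_norm_one_add_sub_re :
    (fun ζ : ℂ => Real.log ‖1 + ζ‖ - ζ.re) =o[𝓝 0] fun ζ => ζ := by
  have expansion := hasDerivAt_iff_isLittleO_nhds_zero.1
    (Complex.hasDerivAt_log Complex.one_mem_slitPlane)
  refine IsBigO.trans_isLittleO (isBigO_of_le _ fun ζ => ?_) expansion
  simpa [Complex.log_re] using Complex.abs_re_le_norm (Complex.log (1 + ζ) - ζ)

theorem isBigO_snd_mul_comp_fst {X : Type*} [TopologicalSpace X] {f : X → ℂ} (hf : Continuous f)
    (x₀ : X) : (fun q : X × ℂ => q.2 * f q.1) =O[𝓝 (x₀, 0)] Prod.snd :=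
  ((isBigO_refl (Prod.snd : X × ℂ → ℂ) _).mul
    ((hf.comp continuous_fst).continuousAt.isBigO_one ℂ)).congr_right fun _ => mul_one _

theorem one_add_ne_zero_of_norm_lt_one {ζ : ℂ} (hζ : ‖ζ‖ < 1) : 1 + ζ ≠ 0 := by
  intro h
  rw [← neg_eq_of_add_eq_zero_right h, norm_neg, norm_one] at hζ
  exact hζ.false

theorem squareSum_log_norm_one_add_le {ζ : ℂ} (hζ : ‖ζ‖ < 1) :
    squareSum (fun ζ => Real.log ‖1 + ζ‖) 0 ζ ≤ ‖ζ‖ ^ 4 := by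
  have factor : (1 + ζ) * (1 - ζ) * ((1 + ζ * Complex.I) * (1 - ζ * Complex.I)) = 1 - ζ ^ 4 := by
    linear_combination (ζ ^ 4 - ζ ^ 2) * Complex.I_sq
  have ne_zero (a : ℂ) (ha : ‖a‖ = ‖ζ‖) : ‖1 + a‖ ≠ 0 :=
    norm_ne_zero_iff.2 (one_add_ne_zero_of_norm_lt_one (ha.trans_lt hζ))
  have h₁ := ne_zero ζ rfl
  have h₂ := ne_zero (-ζ) (by simp)
  have h₃ := ne_zero (ζ * Complex.I) (by simp)
  have h₄ := ne_zero (-(ζ * Complex.I)) (by simp)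
  rw [← sub_eq_add_neg] at h₂ h₄
  simp only [squareSum, zero_add, zero_sub, ← sub_eq_add_neg]
  rw [← Real.log_mul h₁ h₂, ← Real.log_mul h₃ h₄,
    ← Real.log_mul (mul_ne_zero h₁ h₂) (mul_ne_zero h₃ h₄), ← norm_mul, ← norm_mul, ← norm_mul,
    factor]
  have pos : 0 < ‖1 - ζ ^ 4‖ := by
    rw [← factor, norm_mul, norm_mul, norm_mul]
    positivity
  have triangle := norm_sub_le 1 (ζ ^ 4)
  rw [norm_one, norm_pow] at triangle
  linarith [Real.log_le_sub_one_of_pos pos]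

end Expansion

/-- The complex number representing the differential of `u`, in the sense that
`du(v) = Re (complexGradient u z * v)`. -/
noncomputable def complexGradient (u : ℂ → ℝ) (z : ℂ) : ℂ :=
  fderiv ℝ u z 1 - fderiv ℝ u z Complex.I * Complex.I

/-- The variation field along `γ` which would generate the dilations about `γ 0` of a flat metric
`e^{2u}|dz|²`: with `θ' = complexGradient u (γ t) * γ'`, the developing map straightens `γ` to a
curve with velocity `γ' * exp θ`, whose position vector is pulled back by multiplication with
`exp (-θ)`. -/
noncomputable def variationField (u : ℂ → ℝ) (γ : ℝ → ℂ) (t : ℝ) : ℂ :=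
  let θ (t : ℝ) : ℂ := ∫ s in (0)..t, complexGradient u (γ s) * deriv γ s
  Complex.exp (-θ t) * ∫ s in (0)..t, deriv γ s * Complex.exp (θ s)

/-- The complex factor between the derivative of a variation field and the velocity of its curve,
at a point `p.1` of the curve where the field has the value `p.2`. -/
noncomputable def variationRate (u : ℂ → ℝ) (p : ℂ × ℂ) : ℂ :=
  1 - complexGradient u p.1 * p.2

/-- The logarithm of the dilation of length elements at `p.1` when moving by `w` times the
variation field, whose value is `p.2`; it is normalized by the factor `e^{Re w}`, by which a flat
metric would be dilated. -/
noncomputable def variationExponent (u : ℂ → ℝ) (p : ℂ × ℂ) (w : ℂ) : ℝ :=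
  u (p.1 + w * p.2) - u p.1 + Real.log ‖1 + w * variationRate u p‖ - w.re

variable {u : ℂ → ℝ}

theorem re_complexGradient_mul (u : ℂ → ℝ) (z v : ℂ) :
    (complexGradient u z * v).re = fderiv ℝ u z v := by
  have hv : v = v.re • (1 : ℂ) + v.im • Complex.I := by
    apply Complex.ext <;> simp
  conv_rhs => rw [hv, map_add, map_smul, map_smul]
  simp only [complexGradient, smul_eq_mul, Complex.mul_re, Complex.sub_re, Complex.sub_im,
    Complex.mul_im, Complex.ofReal_re, Complex.ofReal_im, Complex.I_re, Complex.I_im]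
  ring

theorem squareSum_variationExponent (u : ℂ → ℝ) (p : ℂ × ℂ) (w : ℂ) :
    squareSum (variationExponent u p) 0 w = squareSum u p.1 (w * p.2) - 4 * u p.1 +
      squareSum (fun ζ => Real.log ‖1 + ζ‖) 0 (w * variationRate u p) := by
  simp only [squareSum, variationExponent, zero_add, zero_sub, neg_mul, Complex.neg_re,
    ← sub_eq_add_neg, mul_right_comm w Complex.I]
  ring

theorem variationField_zero (u : ℂ → ℝ) (γ : ℝ → ℂ) : variationField u γ 0 = 0 := by
  simp [variationField]

section VariationField

variable (hu : ContDiff ℝ 1 u)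
include hu

theorem continuous_complexGradient : Continuous (complexGradient u) := by
  have := hu.continuous_fderiv one_ne_zero
  unfold complexGradient
  fun_prop

theorem continuous_variationRate : Continuous (variationRate u) := by
  have := continuous_complexGradient hu
  unfold variationRate
  fun_prop

variable {γ : ℝ → ℂ} (hγ : ContDiff ℝ 1 γ)
include hγ

theorem continuous_complexGradient_mul_deriv :
    Continuous fun t => complexGradient u (γ t) * deriv γ t :=
  ((continuous_complexGradient hu).comp hγ.continuous).mul (hγ.continuous_deriv le_rfl)

theorem re_integral_complexGradient_mul_deriv (t : ℝ) :
    (∫ s in (0)..t, complexGradient u (γ s) * deriv γ s).re = u (γ t) - u (γ 0) := by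
  have chain (s : ℝ) : HasDerivAt (u ∘ γ) (complexGradient u (γ s) * deriv γ s).re s := by
    rw [re_complexGradient_mul]
    exact (hu.differentiable one_ne_zero _).hasFDerivAt.comp_hasDerivAt s
      (hγ.differentiable one_ne_zero s).hasDerivAt
  have continuous := continuous_complexGradient_mul_deriv hu hγ
  rw [← Function.comp_apply (f := u), ← Function.comp_apply (f := u) (x := (0 : ℝ)),
    ← intervalIntegral.integral_eq_sub_of_hasDerivAt (fun s _ => chain s)
      ((Complex.continuous_re.comp continuous).intervalIntegrable 0 t)]
  exact (intervalIntegral.intervalIntegral_re (𝕜 := ℂ) (continuous.intervalIntegrable _ _)).symm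

theorem hasDerivAt_variationField (t : ℝ) :
    HasDerivAt (variationField u γ)
      (deriv γ t * variationRate u (γ t, variationField u γ t)) t := by
  have angle (t : ℝ) := ((continuous_complexGradient_mul_deriv hu hγ).integral_hasStrictDerivAt
    0 t).hasDerivAt
  have position := (((hγ.continuous_deriv le_rfl).mul (continuous_iff_continuousAt.2
    fun t => (angle t).continuousAt).cexp).integral_hasStrictDerivAt 0 t).hasDerivAt
  refine ((angle t).neg.cexp.mul position).congr_deriv ?_
  simp only [variationRate, variationField, Pi.mul_apply, Pi.neg_apply, Complex.exp_neg]
  field_simp [Complex.exp_ne_zero]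
  ring

theorem contDiff_variationField : ContDiff ℝ 1 (variationField u γ) := by
  have hderiv := hasDerivAt_variationField hu hγ
  have hcont : Continuous (variationField u γ) :=
    continuous_iff_continuousAt.2 fun t => (hderiv t).continuousAt
  refine contDiff_one_iff_deriv.2 ⟨fun t => (hderiv t).differentiableAt, ?_⟩
  rw [funext fun t => (hderiv t).deriv]
  exact (hγ.continuous_deriv le_rfl).mul
    ((continuous_variationRate hu).comp (hγ.continuous.prodMk hcont))

theorem norm_variationField_le {t : ℝ} (ht : 0 ≤ t) :
    ‖variationField u γ t‖ ≤ Real.exp (-u (γ t)) * ∫ s in (0)..t, conformalSpeed u γ s := by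
  have position : ‖∫ s in (0)..t, deriv γ s *
      Complex.exp (∫ s in (0)..s, complexGradient u (γ s) * deriv γ s)‖ ≤
        Real.exp (-u (γ 0)) * ∫ s in (0)..t, conformalSpeed u γ s := by
    refine (intervalIntegral.norm_integral_le_integral_norm ht).trans_eq ?_
    rw [← intervalIntegral.integral_const_mul]
    congr 1 with s
    rw [norm_mul, Complex.norm_exp, re_integral_complexGradient_mul_deriv hu hγ, conformalSpeed,
      sub_eq_add_neg, Real.exp_add]
    ring
  rw [variationField, norm_mul, Complex.norm_exp, Complex.neg_re,
    re_integral_complexGradient_mul_deriv hu hγ]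
  refine (mul_le_mul_of_nonneg_left position (Real.exp_pos _).le).trans_eq ?_
  rw [← mul_assoc, ← Real.exp_add]
  ring_nf

theorem exp_neg_re_mul_conformalSpeed_add_variationField {t : ℝ} {w : ℂ}
    (hw : ‖w * variationRate u (γ t, variationField u γ t)‖ < 1) :
    Real.exp (-w.re) * conformalSpeed u (fun s => γ s + w * variationField u γ s) t =
      Real.exp (variationExponent u (γ t, variationField u γ t) w) * conformalSpeed u γ t := by
  have velocity := (hγ.differentiable one_ne_zero t).hasDerivAt.fun_add
    ((hasDerivAt_variationField hu hγ t).const_mul w)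
  have hne := norm_pos_iff.2 (one_add_ne_zero_of_norm_lt_one hw)
  rw [variationExponent, conformalSpeed, conformalSpeed, velocity.deriv, Real.exp_sub, Real.exp_add,
    Real.exp_log hne, Real.exp_sub, Real.exp_neg, mul_left_comm w, ← mul_one_add, norm_mul]
  field_simp

end VariationField

theorem isLittleO_variationExponent (hu : ContDiff ℝ 1 u) (p₀ : ℂ × ℂ) :
    (fun q : (ℂ × ℂ) × ℂ => variationExponent u q.1 q.2) =o[𝓝 (p₀, 0)] Prod.snd := by
  have hrate := continuous_variationRate hu
  have displacement := (isLittleO_add_sub_sub_fderiv hu p₀.1).comp_tendsto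
    (Continuous.tendsto' (f := fun q : (ℂ × ℂ) × ℂ => (q.1.1, q.2 * q.1.2)) (by fun_prop)
      (p₀, 0) _ (by simp))
  have stretching := isLittleO_log_norm_one_add_sub_re.comp_tendsto
    (Continuous.tendsto' (f := fun q : (ℂ × ℂ) × ℂ => q.2 * variationRate u q.1) (by fun_prop)
      (p₀, 0) _ (by simp))
  refine ((displacement.trans_isBigO (isBigO_snd_mul_comp_fst continuous_snd p₀)).add
    (stretching.trans_isBigO (isBigO_snd_mul_comp_fst hrate p₀))).congr_left fun q => ?_
  simp only [Function.comp, variationExponent, ← re_complexGradient_mul, variationRate]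
  rw [mul_sub, mul_one, Complex.sub_re, mul_left_comm q.2]
  ring

theorem eventually_exp_variationExponent_le (hu : ContDiff ℝ 1 u) (p₀ : ℂ × ℂ) {η : ℝ}
    (hη : 0 < η) : ∀ᶠ q : (ℂ × ℂ) × ℂ in 𝓝 (p₀, 0),
      Real.exp (variationExponent u q.1 q.2) ≤
        1 + variationExponent u q.1 q.2 + η * ‖q.2‖ ^ 2 := by
  have small := (isLittleO_variationExponent hu p₀).def (Real.sqrt_pos.2 hη)
  have bounded : ∀ᶠ q : (ℂ × ℂ) × ℂ in 𝓝 (p₀, 0), √η * ‖q.2‖ < 1 :=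
    (Continuous.tendsto' (by fun_prop) _ _ (by simp)).eventually_lt_const one_pos
  filter_upwards [small, bounded] with q hq hq1
  rw [Real.norm_eq_abs] at hq
  have taylor := (abs_le.1 (Real.abs_exp_sub_one_sub_id_le (hq.trans hq1.le))).2
  have square : variationExponent u q.1 q.2 ^ 2 ≤ (√η * ‖q.2‖) ^ 2 := sq_le_sq' (by
    linarith [(abs_le.1 hq).1]) (abs_le.1 hq).2
  rw [mul_pow, Real.sq_sqrt hη.le] at square
  linarith

theorem eventually_norm_mul_variationRate_lt_one (hu : ContDiff ℝ 1 u) (p₀ : ℂ × ℂ) :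
    ∀ᶠ q : (ℂ × ℂ) × ℂ in 𝓝 (p₀, 0), ‖q.2 * variationRate u q.1‖ < 1 := by
  have := continuous_variationRate hu
  exact (Continuous.tendsto' (by fun_prop) _ _ (by simp)).eventually_lt_const one_pos

theorem eventually_squareSum_variationExponent_le (hu : ContDiff ℝ 1 u) {p₀ : ℂ × ℂ}
    (hs : SquareSuperharmonicAt u p₀.1) {η : ℝ} (hη : 0 < η) :
    ∀ᶠ q : (ℂ × ℂ) × ℂ in 𝓝 (p₀, 0),
      squareSum (variationExponent u q.1) 0 q.2 ≤ η * ‖q.2‖ ^ 2 := by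
  have hrate := continuous_variationRate hu
  obtain ⟨C, hC, hbound⟩ := (isBigO_snd_mul_comp_fst continuous_snd p₀).exists_pos
  have displacement : ∀ᶠ q : (ℂ × ℂ) × ℂ in 𝓝 (p₀, 0), squareSum u q.1.1 (q.2 * q.1.2) ≤
      4 * u q.1.1 + η / (2 * C ^ 2) * ‖q.2 * q.1.2‖ ^ 2 :=
    (Continuous.tendsto' (f := fun q : (ℂ × ℂ) × ℂ => (q.1.1, q.2 * q.1.2)) (by fun_prop)
      (p₀, 0) _ (by simp)).eventually (hs _ (by positivity))
  have quartic : ∀ᶠ q : (ℂ × ℂ) × ℂ in 𝓝 (p₀, 0),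
      ‖(q.2 * variationRate u q.1) ^ 4‖ ≤ η / 2 * ‖q.2 ^ 2‖ :=
    (((isBigO_snd_mul_comp_fst hrate p₀).pow 4).trans_isLittleO
      ((isLittleO_pow_pow (by norm_num : 2 < 4)).comp_tendsto
        (continuous_snd.tendsto (p₀, (0 : ℂ))))).def (half_pos hη)
  filter_upwards [hbound.bound, displacement, quartic,
    eventually_norm_mul_variationRate_lt_one hu p₀] with q h₁ h₂ h₃ h₄
  rw [norm_pow, norm_pow] at h₃
  have field : η / (2 * C ^ 2) * ‖q.2 * q.1.2‖ ^ 2 ≤ η / 2 * ‖q.2‖ ^ 2 := by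
    calc η / (2 * C ^ 2) * ‖q.2 * q.1.2‖ ^ 2 ≤ η / (2 * C ^ 2) * (C * ‖q.2‖) ^ 2 := by gcongr
      _ = η / 2 * ‖q.2‖ ^ 2 := by field_simp
  rw [squareSum_variationExponent]
  linarith [squareSum_log_norm_one_add_le h₄]

theorem eventually_squareSum_exp_variationExponent_le (hu : ContDiff ℝ 1 u) {p₀ : ℂ × ℂ}
    (hs : SquareSuperharmonicAt u p₀.1) {η : ℝ} (hη : 0 < η) :
    ∀ᶠ q : (ℂ × ℂ) × ℂ in 𝓝 (p₀, 0),
      squareSum (fun w => Real.exp (variationExponent u q.1 w)) 0 q.2 ≤ 4 + η * ‖q.2‖ ^ 2 := by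
  have rotate (ω : ℂ) (hω : ‖ω‖ = 1) : ∀ᶠ q : (ℂ × ℂ) × ℂ in 𝓝 (p₀, 0),
      Real.exp (variationExponent u q.1 (q.2 * ω)) ≤
        1 + variationExponent u q.1 (q.2 * ω) + η / 8 * ‖q.2‖ ^ 2 := by
    have := (Continuous.tendsto' (f := fun q : (ℂ × ℂ) × ℂ => (q.1, q.2 * ω)) (by fun_prop)
      (p₀, 0) _ (by simp)).eventually (eventually_exp_variationExponent_le hu p₀ (η := η / 8)
        (by positivity))
    simpa only [norm_mul, hω, mul_one] using this
  filter_upwards [rotate 1 (by simp), rotate (-1) (by simp), rotate Complex.I (by simp),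
    rotate (-Complex.I) (by simp), eventually_squareSum_variationExponent_le hu hs (half_pos hη)]
    with q h₁ h₂ h₃ h₄ hsum
  simp only [mul_one, mul_neg] at h₁ h₂ h₃ h₄
  simp only [squareSum, zero_add, zero_sub] at hsum ⊢
  linarith

end SecondVariation

section LogDistance

variable {u : ℂ → ℝ} {S : Set (ℂ × ℂ)} {o z w : ℂ} {l : ℝ} {γ : ℝ → ℂ}

/-- A path from `o` to `z` of length at most `l` in the metric `e^{2u}|dz|²`, along which position
and variation field stay in the set `S`. -/
structure IsControlledPath (u : ℂ → ℝ) (S : Set (ℂ × ℂ)) (o z : ℂ) (l : ℝ) (γ : ℝ → ℂ) : Prop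
    extends IsRestingPath γ o z where
  mem : ∀ t ∈ Set.Icc (0 : ℝ) 1, (γ t, variationField u γ t) ∈ S
  length_le : ∫ t in (0)..1, conformalSpeed u γ t ≤ l

theorem exists_isControlledPath (hu : ContDiff ℝ 1 u) (hcomp : IsConformallyComplete u)
    (o : ℂ) (D : ℝ) : ∃ R P : ℝ, ∀ z l, conformalDist u o z < l → l ≤ D →
      ∃ γ, IsControlledPath u (closedBall 0 R ×ˢ closedBall 0 P) o z l γ := by
  obtain ⟨R, hR⟩ := (hcomp.isBounded_conformalDist_lt hu.continuous o D).exists_norm_le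
  obtain ⟨N, hN⟩ := (isCompact_closedBall (0 : ℂ) R).exists_bound_of_continuousOn
    (f := fun z => Real.exp (-u z)) (by have := hu.continuous; fun_prop)
  refine ⟨R, |N| * |D|, fun z l hl hlD => ?_⟩
  obtain ⟨γ, hγ, hlength⟩ := exists_isRestingPath_lt hu.continuous hl
  refine ⟨γ, hγ, fun t ht => ?_, hlength.le⟩
  have initial : ∫ s in (0)..t, conformalSpeed u γ s < D :=
    (integral_conformalSpeed_mono_interval hu.continuous hγ.contDiff le_rfl ht.1 ht.2).trans_lt
      (hlength.trans_le hlD)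
  have position : ‖γ t‖ ≤ R := hR _ ((hγ.conformalDist_left_le hu.continuous ht.1).trans_lt initial)
  have density := hN (γ t) (mem_closedBall_zero_iff.2 position)
  rw [Real.norm_of_nonneg (Real.exp_pos _).le] at density
  refine ⟨mem_closedBall_zero_iff.2 position, mem_closedBall_zero_iff.2 ?_⟩
  refine (norm_variationField_le hu hγ.contDiff ht.1).trans ?_
  gcongr
  · exact intervalIntegral.integral_nonneg ht.1 fun s _ => conformalSpeed_nonneg u γ s
  · exact density.trans (le_abs_self N)
  · exact initial.le.trans (le_abs_self D)

namespace IsControlledPath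

section Variation

variable (h : IsControlledPath u S o z l γ) (hu : ContDiff ℝ 1 u)
include h hu

theorem contDiff_add_mul_variationField (w : ℂ) :
    ContDiff ℝ 1 fun t => γ t + w * variationField u γ t :=
  h.contDiff.add (contDiff_const.mul (contDiff_variationField hu h.contDiff))

theorem conformalDist_add_mul_le (w : ℂ) :
    conformalDist u o (z + w * variationField u γ 1) ≤
      ∫ t in (0)..1, conformalSpeed u (fun s => γ s + w * variationField u γ s) t := by
  simpa [h.left, h.right, variationField_zero] using conformalDist_le_integral hu.continuous
    (h.contDiff_add_mul_variationField hu w) zero_le_one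

variable (hw : ∀ p ∈ S, ‖w * variationRate u p‖ < 1)
include hw

theorem eqOn_exp_variationExponent_mul_conformalSpeed :
    Set.EqOn (fun t => Real.exp (-w.re) *
        conformalSpeed u (fun s => γ s + w * variationField u γ s) t)
      (fun t => Real.exp (variationExponent u (γ t, variationField u γ t) w) *
        conformalSpeed u γ t) (Set.uIcc 0 1) := fun t ht =>
  exp_neg_re_mul_conformalSpeed_add_variationField hu h.contDiff
    (hw _ (h.mem t (by rwa [Set.uIcc_of_le zero_le_one] at ht)))

theorem intervalIntegrable_exp_variationExponent_mul_conformalSpeed :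
    IntervalIntegrable (fun t => Real.exp (variationExponent u (γ t, variationField u γ t) w) *
      conformalSpeed u γ t) volume 0 1 :=
  ((intervalIntegrable_conformalSpeed hu.continuous (h.contDiff_add_mul_variationField hu w)
    0 1).const_mul _).congr
      ((h.eqOn_exp_variationExponent_mul_conformalSpeed hu hw).mono Set.uIoc_subset_uIcc)

theorem exp_neg_re_mul_conformalDist_le :
    Real.exp (-w.re) * conformalDist u o (z + w * variationField u γ 1) ≤
      ∫ t in (0)..1, Real.exp (variationExponent u (γ t, variationField u γ t) w) *
        conformalSpeed u γ t := by
  rw [← intervalIntegral.integral_congr (h.eqOn_exp_variationExponent_mul_conformalSpeed hu hw),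
    intervalIntegral.integral_const_mul]
  exact mul_le_mul_of_nonneg_left (h.conformalDist_add_mul_le hu w) (Real.exp_pos _).le

end Variation

theorem integral_mul_conformalSpeed_le (h : IsControlledPath u S o z l γ) (hu : ContDiff ℝ 1 u)
    {f : ℂ × ℂ → ℝ} {b : ℝ} (hb : 0 ≤ b) (hfb : ∀ p ∈ S, f p ≤ b)
    (hf : IntervalIntegrable (fun t => f (γ t, variationField u γ t) * conformalSpeed u γ t)
      volume 0 1) :
    ∫ t in (0)..1, f (γ t, variationField u γ t) * conformalSpeed u γ t ≤ b * l := by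
  calc ∫ t in (0)..1, f (γ t, variationField u γ t) * conformalSpeed u γ t
      ≤ ∫ t in (0)..1, b * conformalSpeed u γ t :=
        intervalIntegral.integral_mono_on zero_le_one hf
          ((intervalIntegrable_conformalSpeed hu.continuous h.contDiff 0 1).const_mul b)
          fun t ht => mul_le_mul_of_nonneg_right (hfb _ (h.mem t ht)) (conformalSpeed_nonneg u γ t)
    _ = b * ∫ t in (0)..1, conformalSpeed u γ t := intervalIntegral.integral_const_mul _ _
    _ ≤ b * l := mul_le_mul_of_nonneg_left h.length_le hb

theorem conformalDist_le_exp_mul (h : IsControlledPath u S o z l γ) (hu : ContDiff ℝ 1 u) {b : ℝ}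
    (hw : ∀ p ∈ S, ‖w * variationRate u p‖ < 1) (hb : ∀ p ∈ S, variationExponent u p w ≤ b) :
    conformalDist u o (z + w * variationField u γ 1) ≤ Real.exp (w.re + b) * l := by
  have bound := (h.exp_neg_re_mul_conformalDist_le hu hw).trans
    (h.integral_mul_conformalSpeed_le hu (Real.exp_pos b).le
      (fun p hp => Real.exp_le_exp.2 (hb p hp))
      (h.intervalIntegrable_exp_variationExponent_mul_conformalSpeed hu hw))
  rwa [Real.exp_neg, inv_mul_le_iff₀ (Real.exp_pos _), ← mul_assoc, ← Real.exp_add] at bound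

theorem conformalDist_le_exp_mul_add (h : IsControlledPath u S o z l γ) (hu : ContDiff ℝ 1 u)
    {s b M : ℝ} (hs : 0 ≤ s) (hw : ∀ p ∈ S, ‖(-s : ℂ) * variationRate u p‖ < 1)
    (hb : ∀ p ∈ S, variationExponent u p (-s) ≤ b)
    (hM : ∀ x ∈ segment ℝ (z + -s * variationField u γ 1) z, Real.exp (u x) ≤ M) :
    conformalDist u o z ≤ Real.exp (-s + b) * l + M * (s * ‖variationField u γ 1‖) := by
  have variation := h.conformalDist_le_exp_mul hu hw hb
  have back := conformalDist_le_mul_norm hu.continuous hM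
  rw [sub_add_cancel_left, norm_neg, norm_mul, norm_neg, Complex.norm_real,
    Real.norm_of_nonneg hs] at back
  rw [Complex.neg_re, Complex.ofReal_re] at variation
  exact (conformalDist_triangle hu.continuous _ _ _).trans (add_le_add variation back)

theorem squareSum_exp_mul_conformalDist_le (h : IsControlledPath u S o z l γ)
    (hu : ContDiff ℝ 1 u) {b : ℝ} (hb : 0 ≤ b) (hw : ∀ p ∈ S, ‖w * variationRate u p‖ < 1)
    (hsum : ∀ p ∈ S, squareSum (fun a => Real.exp (variationExponent u p a)) 0 w ≤ b) :
    squareSum (fun a => Real.exp (-a.re) * conformalDist u o (z + a * variationField u γ 1)) 0 w ≤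
      b * l := by
  have hrotate (a : ℂ) (ha : ‖a‖ = ‖w‖) (p : ℂ × ℂ) (hp : p ∈ S) : ‖a * variationRate u p‖ < 1 := by
    rw [norm_mul, ha, ← norm_mul]
    exact hw p hp
  have bound (a : ℂ) (ha : ‖a‖ = ‖w‖) := h.exp_neg_re_mul_conformalDist_le hu (hrotate a ha)
  have integrable (a : ℂ) (ha : ‖a‖ = ‖w‖) :=
    h.intervalIntegrable_exp_variationExponent_mul_conformalSpeed hu (hrotate a ha)
  have norms : ‖-w‖ = ‖w‖ ∧ ‖w * Complex.I‖ = ‖w‖ ∧ ‖-(w * Complex.I)‖ = ‖w‖ := by simp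
  have i₁ := (integrable w rfl).add (integrable (-w) norms.1)
  have i₂ := (integrable (w * Complex.I) norms.2.1).add (integrable (-(w * Complex.I)) norms.2.2)
  have total := h.integral_mul_conformalSpeed_le hu hb hsum
    ((i₁.add i₂).congr fun t _ => by simp [squareSum, add_mul])
  simp only [squareSum, zero_add, zero_sub, add_mul] at total ⊢
  rw [intervalIntegral.integral_add i₁ i₂,
    intervalIntegral.integral_add (integrable _ rfl) (integrable _ norms.1),
    intervalIntegral.integral_add (integrable _ norms.2.1) (integrable _ norms.2.2)] at total
  linarith [bound _ rfl, bound _ norms.1, bound _ norms.2.1, bound _ norms.2.2]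

theorem squareSum_log_conformalDist_le (h : IsControlledPath u S o z l γ) (hu : ContDiff ℝ 1 u)
    {b : ℝ} (hb : 0 ≤ b) (hl : 0 < l) (hw : ∀ p ∈ S, ‖w * variationRate u p‖ < 1)
    (hsum : ∀ p ∈ S, squareSum (fun a => Real.exp (variationExponent u p a)) 0 w ≤ 4 + b)
    (hpos : ∀ a : ℂ, ‖a‖ = ‖w * variationField u γ 1‖ → 0 < conformalDist u o (z + a)) :
    squareSum (fun x => Real.log (conformalDist u o x)) z (w * variationField u γ 1) ≤
      4 * Real.log l + b := by
  set φ := variationField u γ 1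
  have hlog (a : ℂ) (ha : ‖a‖ = ‖w‖) : Real.log (conformalDist u o (z + a * φ)) ≤
      a.re + Real.log l + (Real.exp (-a.re) * conformalDist u o (z + a * φ) / l - 1) := by
    have hd := hpos (a * φ) (by rw [norm_mul, ha, norm_mul])
    have hle := Real.log_le_sub_one_of_pos
      (show 0 < Real.exp (-a.re) * conformalDist u o (z + a * φ) / l by positivity)
    rw [Real.log_div (by positivity) hl.ne', Real.log_mul (by positivity) hd.ne',
      Real.log_exp] at hle
    linarith
  have total := (div_le_iff₀ hl).2
    (h.squareSum_exp_mul_conformalDist_le hu (by linarith) hw hsum)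
  have l₁ := hlog w rfl
  have l₂ := hlog (-w) (by simp)
  have l₃ := hlog (w * Complex.I) (by simp)
  have l₄ := hlog (-(w * Complex.I)) (by simp)
  simp only [squareSum, zero_add, add_div, sub_eq_add_neg, neg_mul, mul_right_comm w Complex.I,
    Complex.neg_re] at l₁ l₂ l₃ l₄ total ⊢
  linarith

end IsControlledPath

theorem eventually_forall_norm_mul_variationRate_lt_one (hu : ContDiff ℝ 1 u) (hS : IsCompact S) :
    ∀ᶠ w in 𝓝 (0 : ℂ), ∀ p ∈ S, ‖w * variationRate u p‖ < 1 :=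
  hS.eventually_forall_of_forall_eventually fun p _ => (continuous_swap.tendsto (0, p)).eventually
    (eventually_norm_mul_variationRate_lt_one hu p)

theorem exp_neg_add_quarter_mul_le {s : ℝ} (hs : 0 ≤ s) (hs1 : s ≤ 1) :
    Real.exp (-s + 1 / 4 * s) * (1 + s / 4) ≤ 1 - s / 4 := by
  calc Real.exp (-s + 1 / 4 * s) * (1 + s / 4)
      ≤ Real.exp (-s + 1 / 4 * s) * Real.exp (s / 4) := by
        gcongr
        linarith [Real.add_one_le_exp (s / 4)]
    _ = (Real.exp (s / 2))⁻¹ := by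
        rw [← Real.exp_add, ← Real.exp_neg]
        ring_nf
    _ ≤ 1 - s / 4 := by
        rw [inv_le_iff_one_le_mul₀ (Real.exp_pos _)]
        nlinarith [Real.add_one_le_exp (s / 2)]

/- Moving by the multiple `-s` of the variation field shortens the path by a factor `e^{-s + o(s)}`,
but changes the distance between its end points by at most a multiple of `s` times the field. -/
theorem exists_le_norm_variationField (hu : ContDiff ℝ 1 u) (hS : IsCompact S) {d : ℝ}
    (hd : 0 < d) (o : ℂ) : ∃ ε > 0, ∃ c > 0, ∀ z l γ, IsControlledPath u S o z l γ →
      d ≤ conformalDist u o z → l ≤ (1 + ε) * conformalDist u o z →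
        c ≤ ‖variationField u γ 1‖ := by
  obtain ⟨R, hR, hSR⟩ := hS.isBounded.exists_pos_norm_le
  obtain ⟨x, -, hmax⟩ := (isCompact_closedBall (0 : ℂ) (R + R)).exists_isMaxOn
    ⟨0, mem_closedBall_self (by positivity)⟩ (f := fun z => Real.exp (u z))
    (by have := hu.continuous; fun_prop)
  have small : ∀ᶠ w in 𝓝 (0 : ℂ), ∀ p ∈ S, ‖variationExponent u p w‖ ≤ 1 / 4 * ‖w‖ :=
    hS.eventually_forall_of_forall_eventually fun p _ =>
      (continuous_swap.tendsto (0, p)).eventually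
        ((isLittleO_variationExponent hu p).def (by norm_num))
  have near : Tendsto (fun s : ℝ => (-s : ℂ)) (𝓝[>] 0) (𝓝 0) :=
    (Continuous.tendsto' (by fun_prop) _ _ (by simp)).mono_left nhdsWithin_le_nhds
  obtain ⟨s, ⟨hexponent, hrate⟩, hs, hs1⟩ := ((near.eventually (small.and
    (eventually_forall_norm_mul_variationRate_lt_one hu hS))).and (Ioo_mem_nhdsGT one_pos)).exists
  have hsnorm : ‖(-s : ℂ)‖ = s := by
    rw [norm_neg, Complex.norm_real, Real.norm_of_nonneg hs.le]
  refine ⟨s / 4, by positivity, d / (4 * Real.exp (u x)), by positivity, fun z l γ h hdz hl => ?_⟩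
  have end_mem := hSR _ (h.mem 1 (by simp))
  rw [h.right, Prod.norm_def, max_le_iff] at end_mem
  have segment_subset : segment ℝ (z + -s * variationField u γ 1) z ⊆ closedBall 0 (R + R) := by
    refine (convex_closedBall _ _).segment_subset (mem_closedBall_zero_iff.2 ?_)
      (mem_closedBall_zero_iff.2 (by linarith))
    refine norm_add_le_of_le end_mem.1 ?_
    rw [norm_mul, hsnorm]
    exact (mul_le_of_le_one_left (norm_nonneg _) hs1.le).trans end_mem.2
  have bound := h.conformalDist_le_exp_mul_add hu hs.le hrate
    (fun p hp => (le_abs_self _).trans (hexponent p hp)) fun y hy => hmax (segment_subset hy)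
  rw [hsnorm] at bound
  have gain : Real.exp (-s + 1 / 4 * s) * l ≤ (1 - s / 4) * conformalDist u o z := by
    calc Real.exp (-s + 1 / 4 * s) * l
        ≤ Real.exp (-s + 1 / 4 * s) * (1 + s / 4) * conformalDist u o z := by
          rw [mul_assoc]
          gcongr
      _ ≤ (1 - s / 4) * conformalDist u o z :=
          mul_le_mul_of_nonneg_right (exp_neg_add_quarter_mul_le hs.le hs1.le)
            (conformalDist_nonneg u o z)
  rw [div_le_iff₀ (by positivity)]
  refine le_of_mul_le_mul_left ?_ hs
  linear_combination 4 * bound + 4 * gain + s * hdz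

theorem conformalDist_pos (hu : Continuous u) (h : z ≠ o) : 0 < conformalDist u o z := by
  have hρ : 0 < ‖z - o‖ := norm_pos_iff.2 (sub_ne_zero.2 h)
  obtain ⟨x, -, hx⟩ := (isCompact_closedBall o ‖z - o‖).exists_isMinOn
    (nonempty_closedBall.2 hρ.le) hu.continuousOn
  exact lt_of_lt_of_le (by positivity) (mul_le_conformalDist hu (Real.exp_pos (u x)).le
    (fun y hy => Real.exp_le_exp.2 (hx hy)) le_rfl)

theorem eventually_squareSum_log_conformalDist_le (hu : ContDiff ℝ 1 u)
    (hs : ∀ z, SquareSuperharmonicAt u z) (hS : IsCompact S) (o : ℂ) {c η : ℝ} (hc : 0 < c)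
    (hη : 0 < η) : ∀ᶠ k in 𝓝 (0 : ℂ), ∀ z l γ, IsControlledPath u S o z l γ →
      c ≤ ‖variationField u γ 1‖ → 0 < l → (∀ a : ℂ, ‖a‖ = ‖k‖ → 0 < conformalDist u o (z + a)) →
        squareSum (fun x => Real.log (conformalDist u o x)) z k ≤ 4 * Real.log l + η * ‖k‖ ^ 2 := by
  have hsum : ∀ᶠ w in 𝓝 (0 : ℂ), ∀ p ∈ S,
      squareSum (fun a => Real.exp (variationExponent u p a)) 0 w ≤ 4 + η * c ^ 2 * ‖w‖ ^ 2 :=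
    hS.eventually_forall_of_forall_eventually fun p _ =>
      (continuous_swap.tendsto (0, p)).eventually
        (eventually_squareSum_exp_variationExponent_le hu (hs _) (by positivity))
  obtain ⟨δ, hδ, hsmall⟩ := Metric.eventually_nhds_iff_ball.1
    (hsum.and (eventually_forall_norm_mul_variationRate_lt_one hu hS))
  filter_upwards [ball_mem_nhds 0 (show 0 < δ * c by positivity)] with k hk z l γ h hφ hl hpos
  obtain ⟨w, rfl⟩ : ∃ w, k = w * variationField u γ 1 :=
    ⟨_, (div_mul_cancel₀ _ (norm_pos_iff.1 (hc.trans_le hφ))).symm⟩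
  have hwc : ‖w‖ * c ≤ ‖w * variationField u γ 1‖ := by
    rw [norm_mul]
    gcongr
  obtain ⟨hw, hrate⟩ := hsmall w (mem_ball_zero_iff.2
    (lt_of_mul_lt_mul_right (hwc.trans_lt (mem_ball_zero_iff.1 hk)) hc.le))
  refine (h.squareSum_log_conformalDist_le hu (by positivity) hl hrate hw hpos).trans ?_
  calc 4 * Real.log l + η * c ^ 2 * ‖w‖ ^ 2 = 4 * Real.log l + η * (‖w‖ * c) ^ 2 := by ring
    _ ≤ 4 * Real.log l + η * ‖w * variationField u γ 1‖ ^ 2 := by gcongr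

theorem squareSuperharmonicAt_log_conformalDist (hu : ContDiff ℝ 1 u)
    (hs : ∀ z, SquareSuperharmonicAt u z) (hcomp : IsConformallyComplete u) (h : z ≠ o) :
    SquareSuperharmonicAt (fun z => Real.log (conformalDist u o z)) z := by
  intro η hη
  have hcont := continuous_conformalDist hu.continuous o
  have hd := conformalDist_pos hu.continuous h
  obtain ⟨R, P, hpath⟩ := exists_isControlledPath hu hcomp o (2 * conformalDist u o z)
  have hS := (isCompact_closedBall (0 : ℂ) R).prod (isCompact_closedBall (0 : ℂ) P)
  obtain ⟨ε, hε, c, hc, hfield⟩ := exists_le_norm_variationField hu hS (half_pos hd) o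
  have near : ∀ᶠ y in 𝓝 z, conformalDist u o y ∈
      Set.Ioo (conformalDist u o z / 2) (2 * conformalDist u o z) :=
    (hcont.tendsto z).eventually (Ioo_mem_nhds (by linarith) (by linarith))
  have small : ∀ᶠ p : ℂ × ℂ in 𝓝 (z, 0), ‖p.2‖ < ‖p.1 - o‖ :=
    ContinuousAt.eventually_lt (by fun_prop) (by fun_prop)
      (by simpa using norm_pos_iff.2 (sub_ne_zero.2 h))
  filter_upwards [(continuous_fst.tendsto (z, 0)).eventually near, small,
    (continuous_snd.tendsto (z, 0)).eventually
      (eventually_squareSum_log_conformalDist_le hu hs hS o hc hη)] with p hnear hsmall hsum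
  have hdp : 0 < conformalDist u o p.1 := (half_pos hd).trans hnear.1
  have hpos (a : ℂ) (ha : ‖a‖ = ‖p.2‖) : 0 < conformalDist u o (p.1 + a) := by
    refine conformalDist_pos hu.continuous fun heq => hsmall.ne ?_
    rw [← heq, sub_add_cancel_left, norm_neg, ha]
  have limit : Tendsto (fun l => 4 * Real.log l + η * ‖p.2‖ ^ 2) (𝓝[>] conformalDist u o p.1)
      (𝓝 (4 * Real.log (conformalDist u o p.1) + η * ‖p.2‖ ^ 2)) :=
    (((Real.continuousAt_log hdp.ne').tendsto.const_mul 4).add_const _).mono_left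
      nhdsWithin_le_nhds
  refine ge_of_tendsto limit ?_
  filter_upwards [Ioo_mem_nhdsGT (lt_min hnear.2
    (lt_mul_of_one_lt_left hdp (show 1 < 1 + ε by linarith)))] with l hl
  have hl' := lt_min_iff.1 hl.2
  obtain ⟨γ, hγ⟩ := hpath p.1 l hl.1 hl'.1.le
  exact hsum p.1 l γ hγ (hfield _ _ _ hγ hnear.1.le hl'.2.le) (hdp.trans hl.1) hpos

end LogDistance

section BallMean

open Real

variable {q : ℂ → ℝ} {c y : ℂ} {r s b t : ℝ}

theorem integrableOn_ball_of_continuous {f : ℂ → ℝ} (hf : Continuous f) (c : ℂ) (r : ℝ) :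
    IntegrableOn f (ball c r) :=
  (hf.continuousOn.integrableOn_compact (isCompact_closedBall c r)).mono_set
    ball_subset_closedBall

theorem measureReal_ball_complex (c : ℂ) (hr : 0 ≤ r) : volume.real (ball c r) = π * r ^ 2 := by
  simp [Measure.real, Complex.volume_ball, hr, mul_comm]

theorem exists_mem_ball_le_of_setIntegral_le (hq : IntegrableOn q (ball c r)) (hr : 0 < r)
    (h : ∫ z in ball c r, q z ≤ π * r ^ 2 * t) : ∃ z ∈ ball c r, q z ≤ t := by
  obtain ⟨z, hz, hle⟩ := exists_le_setAverage (measure_ball_pos volume c hr).ne'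
    measure_ball_lt_top.ne hq
  refine ⟨z, hz, hle.trans ?_⟩
  rw [setAverage_eq, measureReal_ball_complex c hr.le, smul_eq_mul]
  exact (inv_mul_le_iff₀ (by positivity)).2 h

theorem setIntegral_ball_sub_le (hq : Continuous q) (hr : 0 ≤ r) (hsub : ball y s ⊆ ball c r)
    (hb : ∀ z ∈ ball c r, b ≤ q z) (hmean : ∀ ρ ∈ Set.Icc 0 r, circleAverage q c ρ ≤ b + t) :
    ∫ z in ball y s, (q z - b) ≤ π * r ^ 2 * t := by
  have hqb : Continuous fun z => q z - b := by fun_prop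
  calc ∫ z in ball y s, (q z - b) ≤ ∫ z in ball c r, (q z - b) := by
        refine setIntegral_mono_set (integrableOn_ball_of_continuous hqb c r) ?_ hsub.eventuallyLE
        filter_upwards [ae_restrict_mem measurableSet_ball] with z hz using sub_nonneg.2 (hb z hz)
    _ ≤ π * r ^ 2 * t := by
        refine setIntegral_ball_le_of_circleAverage_le hqb hr fun ρ hρ => ?_
        rw [circleAverage_fun_sub hq.continuousOn.circleIntegrable'
          continuousOn_const.circleIntegrable', circleAverage_const, sub_le_iff_le_add']
        exact hmean ρ hρ

end BallMean

section LogDistRatio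

theorem tendsto_conformalDist_div_norm {E : Type*} [NormedAddCommGroup E] [NormedSpace ℝ E]
    [CompleteSpace E] {u : E → ℝ} (hu : Continuous u) (o : E) :
    Tendsto (fun z => conformalDist u o z / ‖z - o‖) (𝓝[≠] o) (𝓝 (Real.exp (u o))) := by
  have hexp : Tendsto (fun z => Real.exp (u z)) (𝓝 o) (𝓝 (Real.exp (u o))) :=
    Continuous.tendsto (by fun_prop) o
  have near {s : Set E} (hs : s ∈ 𝓝 o) : ∀ᶠ z in 𝓝[≠] o, closedBall o ‖z - o‖ ⊆ s :=
    (Continuous.tendsto' (by fun_prop) _ _ (by simp)).eventually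
      (eventually_closedBall_subset hs) |>.filter_mono nhdsWithin_le_nhds
  have pos : ∀ᶠ z in 𝓝[≠] o, 0 < ‖z - o‖ := by
    filter_upwards [self_mem_nhdsWithin] with z hz using norm_sub_pos_iff.2 hz
  refine tendsto_order.2 ⟨fun m hm => ?_, fun M hM => ?_⟩
  · obtain ⟨M, hmM, hM⟩ := exists_between (max_lt hm (Real.exp_pos (u o)))
    rw [max_lt_iff] at hmM
    filter_upwards [near (hexp.eventually_const_lt hM), pos] with z hz hpos
    exact hmM.1.trans_le ((le_div_iff₀ hpos).2
      (mul_le_conformalDist hu hmM.2.le (fun x hx => (hz hx).le) le_rfl))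
  · obtain ⟨m, hm, hmM⟩ := exists_between hM
    filter_upwards [near (hexp.eventually_lt_const hm), pos] with z hz hpos
    refine ((div_le_iff₀ hpos).2 (conformalDist_le_mul_norm hu fun x hx => ?_)).trans_lt hmM
    exact (hz ((convex_closedBall o _).segment_subset (mem_closedBall_self hpos.le)
      (mem_closedBall_iff_norm.2 le_rfl) hx)).le

open Classical in
/-- The logarithm of the ratio of the distances from `o` in the metric `e^{2u}|dz|²` and in the flat
metric, extended to `o` by its limit `u o`. -/
noncomputable def logDistRatio (u : ℂ → ℝ) (o : ℂ) : ℂ → ℝ :=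
  Function.update (fun z => Real.log (conformalDist u o z / ‖z - o‖)) o (u o)

variable {u : ℂ → ℝ} {o z : ℂ} {r : ℝ}

theorem logDistRatio_self (u : ℂ → ℝ) (o : ℂ) : logDistRatio u o o = u o :=
  Function.update_self ..

theorem logDistRatio_of_ne (u : ℂ → ℝ) (h : z ≠ o) :
    logDistRatio u o z = Real.log (conformalDist u o z / ‖z - o‖) :=
  Function.update_of_ne h ..

theorem logDistRatio_eventuallyEq (u : ℂ → ℝ) (h : z ≠ o) :
    logDistRatio u o =ᶠ[𝓝 z] fun z => Real.log (conformalDist u o z / ‖z - o‖) := by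
  filter_upwards [isOpen_ne.mem_nhds h] with w hw using logDistRatio_of_ne u hw

theorem conformalDist_eq_exp_mul (hu : Continuous u) (o z : ℂ) :
    conformalDist u o z = Real.exp (logDistRatio u o z) * ‖z - o‖ := by
  rcases eq_or_ne z o with rfl | h
  · rw [conformalDist_self hu, sub_self, norm_zero, mul_zero]
  · have hpos := norm_sub_pos_iff.2 h
    rw [logDistRatio_of_ne u h, Real.exp_log (div_pos (conformalDist_pos hu h) hpos),
      div_mul_cancel₀ _ hpos.ne']

theorem continuous_logDistRatio (hu : Continuous u) (o : ℂ) : Continuous (logDistRatio u o) := by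
  refine continuous_iff_continuousAt.2 fun z => ?_
  rcases eq_or_ne z o with rfl | h
  · refine continuousAt_update_same.2 ?_
    simpa only [Real.log_exp] using (tendsto_conformalDist_div_norm hu z).log (Real.exp_ne_zero _)
  · have hpos := norm_sub_pos_iff.2 h
    have ratio : ContinuousAt (fun z => conformalDist u o z / ‖z - o‖) z :=
      (continuous_conformalDist hu o).continuousAt.div (by fun_prop) hpos.ne'
    exact (ratio.log (div_pos (conformalDist_pos hu h) hpos).ne').congr
      (logDistRatio_eventuallyEq u h).symm

theorem exists_mem_sphere_logDistRatio_le (hu : Continuous u) (o : ℂ) (hr : 0 < r) :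
    ∃ b, ∃ y ∈ sphere o r, logDistRatio u o y ≤ b + 2 ∧
      ∀ z ∈ sphere o (5 * r), b ≤ logDistRatio u o z := by
  obtain ⟨y, hy, hmin⟩ := exists_mem_sphere_conformalDist_le hu o hr.le
  obtain ⟨x, hx, hxmin⟩ := (isCompact_sphere o (5 * r)).exists_isMinOn
    (NormedSpace.sphere_nonempty.2 (by positivity)) (continuous_logDistRatio hu o).continuousOn
  refine ⟨logDistRatio u o x, y, hy, ?_, fun z hz => hxmin hz⟩
  have hyo := ne_of_mem_sphere hy hr.ne'
  have hxo := ne_of_mem_sphere hx (by positivity)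
  rw [mem_sphere_iff_norm] at hx hy
  have hdist : Real.log (conformalDist u o y) ≤ Real.log (conformalDist u o x) :=
    Real.log_le_log (conformalDist_pos hu hyo) (hmin x (by linarith))
  rw [logDistRatio_of_ne u hyo, logDistRatio_of_ne u hxo, hx, hy,
    Real.log_div (conformalDist_pos hu hyo).ne' hr.ne',
    Real.log_div (conformalDist_pos hu hxo).ne' (by positivity), Real.log_mul (by simp) hr.ne']
  linarith [Real.log_five_lt_d9]

section Superharmonic

variable (hu : ContDiff ℝ 1 u) (hs : ∀ z, SquareSuperharmonicAt u z)
  (hcomp : IsConformallyComplete u)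
include hu hs hcomp

theorem squareSuperharmonicAt_logDistRatio (h : z ≠ o) :
    SquareSuperharmonicAt (logDistRatio u o) z := by
  refine ((squareSuperharmonicAt_log_conformalDist hu hs hcomp h).add
    (squareSuperharmonicAt_const_mul_log_norm_sub (-1) h)).congr ?_
  filter_upwards [isOpen_ne.mem_nhds h] with w hw
  rw [logDistRatio_of_ne u hw, Real.log_div (conformalDist_pos hu.continuous hw).ne'
    (norm_sub_pos_iff.2 hw).ne', neg_one_mul, ← sub_eq_add_neg]

theorem exists_setIntegral_logDistRatio_sub_le (hr : 0 < r) (ho : ‖o‖ ≤ r) :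
    ∃ b ≤ u o, (∀ z ∈ ball (0 : ℂ) (2 * r), b ≤ logDistRatio u o z) ∧
      ∫ z in ball (0 : ℂ) (2 * r), (logDistRatio u o z - b) ≤ π * (2 * r) ^ 2 * 8 := by
  have hcont := continuous_logDistRatio hu.continuous o
  have hsuper (z : ℂ) (hz : z ≠ o) : SquareSuperharmonicAt (logDistRatio u o) z :=
    squareSuperharmonicAt_logDistRatio hu hs hcomp hz
  obtain ⟨b, y, hy, hyb, hb⟩ := exists_mem_sphere_logDistRatio_le hu.continuous o hr
  have lower (z : ℂ) (hz : z ∈ closedBall o (5 * r)) : b ≤ logDistRatio u o z :=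
    minimum_principle_punctured hcont hsuper (by positivity) hb hz
  have inner : ball (0 : ℂ) (2 * r) ⊆ ball y (4 * r) := by
    refine ball_subset_ball' ?_
    linarith [dist_triangle_right 0 y o, dist_zero_left o, mem_sphere.1 hy]
  have outer : ball y (4 * r) ⊆ closedBall o (5 * r) := by
    refine ball_subset_closedBall.trans (closedBall_subset_closedBall' ?_)
    linarith [mem_sphere.1 hy]
  refine ⟨b, ?_, fun z hz => lower z (outer (inner hz)), ?_⟩
  · simpa only [logDistRatio_self] using lower o (mem_closedBall_self (by positivity))
  · refine (setIntegral_ball_sub_le hcont (by positivity) inner (fun z hz => lower z (outer hz))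
      fun ρ hρ => ?_).trans_eq (by ring : π * (4 * r) ^ 2 * 2 = _)
    exact (circleAverage_le_center_punctured hcont hsuper (ne_of_mem_sphere hy hr.ne') hρ.1).trans
      hyb

theorem exists_mem_ball_logDistRatio_le {o' : ℂ} (hr : 0 < r) (ho : ‖o‖ ≤ r) (ho' : ‖o'‖ ≤ r) :
    ∃ y ∈ ball (0 : ℂ) (2 * r),
      logDistRatio u o y ≤ u o + 16 ∧ logDistRatio u o' y ≤ u o' + 16 := by
  obtain ⟨b, hbo, hb, hint⟩ := exists_setIntegral_logDistRatio_sub_le hu hs hcomp hr ho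
  obtain ⟨b', hbo', hb', hint'⟩ := exists_setIntegral_logDistRatio_sub_le hu hs hcomp hr ho'
  have integrable (p : ℂ) (b : ℝ) :
      IntegrableOn (fun z => logDistRatio u p z - b) (ball (0 : ℂ) (2 * r)) :=
    integrableOn_ball_of_continuous
      ((continuous_logDistRatio hu.continuous p).sub continuous_const) _ _
  obtain ⟨y, hy, hle⟩ := exists_mem_ball_le_of_setIntegral_le (t := 16)
    ((integrable o b).add (integrable o' b')) (by positivity) <| by
      rw [integral_add' (integrable o b) (integrable o' b')]
      linarith
  rw [Pi.add_apply] at hle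
  exact ⟨y, hy, by linarith [hb' y hy], by linarith [hb y hy]⟩

theorem conformalDist_le_mul_exp_add_exp {o' : ℂ} (hr : 0 < r) (ho : ‖o‖ ≤ r) (ho' : ‖o'‖ ≤ r) :
    conformalDist u o o' ≤ 3 * Real.exp 16 * r * (Real.exp (u o) + Real.exp (u o')) := by
  obtain ⟨y, hy, hle, hle'⟩ := exists_mem_ball_logDistRatio_le hu hs hcomp hr ho ho'
  have dist_le (p : ℂ) (hp : ‖p‖ ≤ r) (hpy : logDistRatio u p y ≤ u p + 16) :
      conformalDist u p y ≤ 3 * Real.exp 16 * r * Real.exp (u p) :=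
    calc conformalDist u p y = Real.exp (logDistRatio u p y) * ‖y - p‖ :=
          conformalDist_eq_exp_mul hu.continuous p y
      _ ≤ Real.exp (u p + 16) * (3 * r) := by
          gcongr
          linarith [norm_sub_le y p, mem_ball_zero_iff.1 hy]
      _ = 3 * Real.exp 16 * r * Real.exp (u p) := by rw [Real.exp_add]; ring
  calc conformalDist u o o' ≤ conformalDist u o y + conformalDist u y o' :=
        conformalDist_triangle hu.continuous o y o'
    _ = conformalDist u o y + conformalDist u o' y := by
        rw [conformalDist_comm hu.continuous y o']
    _ ≤ _ := by linarith [dist_le o ho hle, dist_le o' ho' hle']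

end Superharmonic

end LogDistRatio

section SphereLowerBound

theorem IsConformallyComplete.not_summable_conformalDist {E : Type*} [NormedAddCommGroup E]
    [NormedSpace ℝ E] [ProperSpace E] {u : E → ℝ} (hcomp : IsConformallyComplete u)
    (hu : Continuous u) {x : ℕ → E} (hx : Tendsto (fun k => ‖x k‖) atTop atTop) :
    ¬ Summable fun k => conformalDist u (x k) (x (k + 1)) := by
  intro hsum
  have chain (n : ℕ) : conformalDist u (x 0) (x n) ≤
      ∑ k ∈ Finset.range n, conformalDist u (x k) (x (k + 1)) := by
    induction n with
    | zero => simp [conformalDist_self hu]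
    | succ n ih =>
      rw [Finset.sum_range_succ]
      linarith [conformalDist_triangle hu (x 0) (x n) (x (n + 1))]
  obtain ⟨R, hR⟩ := (hcomp.isBounded_conformalDist_lt hu (x 0)
    (∑' k, conformalDist u (x k) (x (k + 1)) + 1)).exists_norm_le
  obtain ⟨n, hn⟩ := (hx.eventually_gt_atTop R).exists
  refine hn.not_ge (hR (x n) ?_)
  exact ((chain n).trans (hsum.sum_le_tsum _ fun _ _ => conformalDist_nonneg ..)).trans_lt
    (lt_add_one _)

variable {u : ℂ → ℝ}

/-- Otherwise points on the circles of radii `2 ^ k` where `e ^ u` is small form a chain which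
diverges in the plane, although its steps are bounded by a geometric sequence. -/
theorem frequently_forall_mem_sphere_neg_mul_log_le (hu : ContDiff ℝ 1 u)
    (hs : ∀ z, SquareSuperharmonicAt u z) (hcomp : IsConformallyComplete u) {ε : ℝ} (hε : 0 < ε) :
    ∃ᶠ R in atTop, ∀ z ∈ sphere (0 : ℂ) R, -(1 + ε) * Real.log R ≤ u z := by
  by_contra hcon
  have pow_atTop : Tendsto (fun k : ℕ => (2 : ℝ) ^ k) atTop atTop :=
    tendsto_pow_atTop_atTop_of_one_lt one_lt_two
  have dips : ∀ᶠ k : ℕ in atTop, ∃ z : ℂ, ‖z‖ = 2 ^ k ∧ u z < -(1 + ε) * Real.log (2 ^ k) := by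
    simpa using pow_atTop.eventually (not_frequently.1 hcon)
  obtain ⟨x, hx⟩ := dips.choice
  have factor (k : ℕ) (h : u (x k) < -(1 + ε) * Real.log (2 ^ k)) :
      Real.exp (u (x k)) ≤ ((2 : ℝ) ^ (-ε)) ^ k / 2 ^ k := by
    rw [Real.rpow_def_of_pos two_pos, ← Real.exp_nat_mul, le_div_iff₀ (by positivity),
      ← Real.log_le_log_iff (by positivity) (by positivity), Real.log_mul (by positivity)
      (by positivity), Real.log_exp, Real.log_exp]
    rw [Real.log_pow] at *
    linarith
  have rate_lt_one : (2 : ℝ) ^ (-ε) < 1 := Real.rpow_lt_one_of_one_lt_of_neg one_lt_two (by simpa)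
  refine hcomp.not_summable_conformalDist hu.continuous
    (pow_atTop.congr' (hx.mono fun k hk => hk.1.symm)) ?_
  refine .of_norm_bounded_eventually_nat ((summable_geometric_of_lt_one (by positivity)
    rate_lt_one).mul_left (12 * Real.exp 16)) ?_
  filter_upwards [hx, (tendsto_add_atTop_nat 1).eventually hx] with k hk hk'
  rw [Real.norm_of_nonneg (conformalDist_nonneg ..)]
  have step := conformalDist_le_mul_exp_add_exp hu hs hcomp (r := 2 ^ (k + 1)) (by positivity)
    (hk.1.trans_le (by gcongr <;> simp)) hk'.1.le
  have decay : ((2 : ℝ) ^ (-ε)) ^ (k + 1) / 2 ^ (k + 1) ≤ ((2 : ℝ) ^ (-ε)) ^ k / 2 ^ k := by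
    gcongr ?_ / 2 ^ ?_
    · exact pow_le_pow_of_le_one (by positivity) rate_lt_one.le k.le_succ
    · exact one_le_two
    · exact k.le_succ
  calc conformalDist u (x k) (x (k + 1)) ≤ _ := step
    _ ≤ 3 * Real.exp 16 * 2 ^ (k + 1) *
        (((2 : ℝ) ^ (-ε)) ^ k / 2 ^ k + ((2 : ℝ) ^ (-ε)) ^ k / 2 ^ k) := by
        gcongr
        · exact factor k hk.2
        · exact (factor (k + 1) hk'.2).trans decay
    _ = 12 * Real.exp 16 * ((2 : ℝ) ^ (-ε)) ^ k := by
        rw [pow_succ]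
        field_simp
        ring

end SphereLowerBound

section CurvatureMass

open Real

/-- The total Gaussian curvature `∫ K dA = ∫ -Δ u` of the disc `ball c r` in the metric
`e^{2u} |dz|²`, divided by `2 * π`. -/
noncomputable def curvatureMass (u : ℂ → ℝ) (c : ℂ) (r : ℝ) : ℝ :=
  (2 * π)⁻¹ * ∫ z in ball c r, -Δ u z

variable {u : ℂ → ℝ} {c c' : ℂ} {r s r₁ r₂ B : ℝ}

theorem curvatureMass_nonneg (hΔ : ∀ z, Δ u z ≤ 0) (c : ℂ) (r : ℝ) : 0 ≤ curvatureMass u c r :=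
  mul_nonneg (by positivity)
    (setIntegral_nonneg measurableSet_ball fun z _ => neg_nonneg.2 (hΔ z))

section ContDiff

variable (hu : ContDiff ℝ 2 u)
include hu

theorem integrableOn_ball_neg_laplacian (c : ℂ) (r : ℝ) :
    IntegrableOn (fun z => -Δ u z) (ball c r) :=
  integrableOn_ball_of_continuous (continuous_laplacian hu).neg c r

theorem curvatureMass_le_of_neg_laplacian_le (hr : 0 ≤ r) (hB : ∀ z ∈ ball c r, -Δ u z ≤ B) :
    curvatureMass u c r ≤ B * r ^ 2 / 2 := by
  have integral_le : ∫ z in ball c r, -Δ u z ≤ ∫ _ in ball c r, B :=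
    setIntegral_mono_on (integrableOn_ball_neg_laplacian hu c r)
      (integrableOn_const measure_ball_lt_top.ne) measurableSet_ball hB
  rw [setIntegral_const, measureReal_ball_complex c hr, smul_eq_mul] at integral_le
  calc (2 * π)⁻¹ * ∫ z in ball c r, -Δ u z ≤ (2 * π)⁻¹ * (π * r ^ 2 * B) := by gcongr
    _ = B * r ^ 2 / 2 := by field_simp

theorem hasDerivAt_circleAverage_curvatureMass (c : ℂ) (hr : 0 < r) :
    HasDerivAt (circleAverage u c) (-(curvatureMass u c r / r)) r := by
  refine (hasDerivAt_circleAverage hu c hr).congr_deriv ?_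
  rw [curvatureMass, integral_neg, smul_eq_mul]
  field_simp

theorem hasDerivAt_circleAverage_add_mul_log (c : ℂ) (a : ℝ) (hr : 0 < r) :
    HasDerivAt (fun t => circleAverage u c t + a * log t) ((a - curvatureMass u c r) / r) r := by
  refine ((hasDerivAt_circleAverage_curvatureMass hu c hr).add
    ((hasDerivAt_log hr.ne').const_mul a)).congr_deriv ?_
  ring

theorem monotoneOn_circleAverage_add_mul_log {a : ℝ} {S : Set ℝ} (hS : Convex ℝ S)
    (hpos : ∀ t ∈ S, 0 < t) (ha : ∀ t ∈ S, curvatureMass u c t ≤ a) :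
    MonotoneOn (fun t => circleAverage u c t + a * log t) S :=
  have hderiv (t : ℝ) (ht : t ∈ S) :=
    hasDerivAt_circleAverage_add_mul_log hu c a (hpos t ht)
  monotoneOn_of_hasDerivWithinAt_nonneg hS
    (fun t ht => (hderiv t ht).continuousAt.continuousWithinAt)
    (fun t ht => (hderiv t (interior_subset ht)).hasDerivWithinAt)
    fun t ht => div_nonneg (sub_nonneg.2 (ha t (interior_subset ht)))
      (hpos t (interior_subset ht)).le

theorem antitoneOn_circleAverage_add_mul_log {a : ℝ} {S : Set ℝ} (hS : Convex ℝ S)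
    (hpos : ∀ t ∈ S, 0 < t) (ha : ∀ t ∈ S, a ≤ curvatureMass u c t) :
    AntitoneOn (fun t => circleAverage u c t + a * log t) S :=
  have hderiv (t : ℝ) (ht : t ∈ S) :=
    hasDerivAt_circleAverage_add_mul_log hu c a (hpos t ht)
  antitoneOn_of_hasDerivWithinAt_nonpos hS
    (fun t ht => (hderiv t ht).continuousAt.continuousWithinAt)
    (fun t ht => (hderiv t (interior_subset ht)).hasDerivWithinAt)
    fun t ht => div_nonpos_of_nonpos_of_nonneg (sub_nonpos.2 (ha t (interior_subset ht)))
      (hpos t (interior_subset ht)).le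

theorem le_circleAverage_add_mul_sq (hr : 0 ≤ r)
    (hB : ∀ t ∈ Set.Icc 0 r, curvatureMass u c t ≤ B * t ^ 2) :
    u c ≤ circleAverage u c r + B * r ^ 2 / 2 := by
  have hderiv (t : ℝ) (ht : t ∈ interior (Set.Icc 0 r)) :
      HasDerivAt (fun t => circleAverage u c t + B * t ^ 2 / 2)
        (B * t - curvatureMass u c t / t) t := by
    rw [interior_Icc] at ht
    refine ((hasDerivAt_circleAverage_curvatureMass hu c ht.1).add
      (((hasDerivAt_pow 2 t).const_mul B).div_const 2)).congr_deriv ?_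
    ring
  have hcont := Real.Continuous.circleAverage (c := c) hu.continuous
  have monotone : MonotoneOn (fun t => circleAverage u c t + B * t ^ 2 / 2) (Set.Icc 0 r) := by
    refine monotoneOn_of_hasDerivWithinAt_nonneg (convex_Icc 0 r) (by fun_prop)
      (fun t ht => (hderiv t ht).hasDerivWithinAt) fun t ht => ?_
    have mass_le := hB t (interior_subset ht)
    rw [interior_Icc] at ht
    rw [sub_nonneg, div_le_iff₀ ht.1]
    linarith
  simpa using monotone (Set.left_mem_Icc.2 hr) (Set.right_mem_Icc.2 hr) hr

end ContDiff

section Nonneg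

variable (hu : ContDiff ℝ 2 u) (hΔ : ∀ z, Δ u z ≤ 0)
include hu hΔ

theorem monotone_curvatureMass (c : ℂ) : Monotone (curvatureMass u c) := fun _ s hrs =>
  mul_le_mul_of_nonneg_left
    (setIntegral_mono_set (integrableOn_ball_neg_laplacian hu c s)
      (ae_of_all _ fun z => neg_nonneg.2 (hΔ z)) (ball_subset_ball hrs).eventuallyLE)
    (by positivity)

theorem curvatureMass_le_sub (hr : r₁ ≤ r₂) (hsub : ball c s ⊆ ball c' r₂ \ ball c' r₁) :
    curvatureMass u c s ≤ curvatureMass u c' r₂ - curvatureMass u c' r₁ := by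
  have integrable := integrableOn_ball_neg_laplacian hu c' r₂
  simp only [curvatureMass]
  rw [← mul_sub, ← setIntegral_sdiff measurableSet_ball integrable (ball_subset_ball hr)]
  refine mul_le_mul_of_nonneg_left ?_ (by positivity)
  exact setIntegral_mono_set (integrable.mono_set Set.sdiff_subset)
    (ae_of_all _ fun z => neg_nonneg.2 (hΔ z)) hsub.eventuallyLE

theorem curvatureMass_pos {z : ℂ} (hz : Δ u z ≠ 0) (hr : dist z c < r) :
    0 < curvatureMass u c r := by
  refine (curvatureMass_nonneg hΔ c r).lt_of_ne' fun mass_eq => hz ?_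
  rw [curvatureMass, mul_eq_zero, or_iff_right (by positivity),
    setIntegral_eq_zero_iff_of_nonneg_ae (ae_of_all _ fun z => neg_nonneg.2 (hΔ z))
      (integrableOn_ball_neg_laplacian hu c r)] at mass_eq
  exact neg_eq_zero.1 (Measure.eqOn_open_of_ae_eq mass_eq isOpen_ball
    (continuous_laplacian hu).neg.continuousOn continuousOn_const (mem_ball.2 hr))

theorem antitoneOn_circleAverage (c : ℂ) : AntitoneOn (circleAverage u c) (Set.Ici 0) := by
  refine antitoneOn_of_hasDerivWithinAt_nonpos (convex_Ici 0)
    (Real.Continuous.circleAverage hu.continuous).continuousOn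
    (f' := fun t => -(curvatureMass u c t / t)) (fun t ht => ?_) fun t ht => ?_
  · rw [interior_Ici] at ht
    exact (hasDerivAt_circleAverage_curvatureMass hu c ht).hasDerivWithinAt
  · exact neg_nonpos.2 (div_nonneg (curvatureMass_nonneg hΔ c t) (interior_subset ht))

theorem mul_circleAverage_sub_le (hr : 0 ≤ r) (b : ℝ) :
    π * r ^ 2 * (circleAverage u c r - b) ≤ ∫ z in ball c r, (u z - b) := by
  have hcont : Continuous fun z => b - u z := by have := hu.continuous; fun_prop
  have upper := setIntegral_ball_le_of_circleAverage_le hcont (c := c) hr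
    (a := b - circleAverage u c r) fun s hs => by
      rw [circleAverage_fun_sub continuousOn_const.circleIntegrable'
        hu.continuous.continuousOn.circleIntegrable', circleAverage_const]
      exact sub_le_sub_left (antitoneOn_circleAverage hu hΔ c hs.1 hr hs.2) b
  have neg : ∫ z in ball c r, (u z - b) = -∫ z in ball c r, (b - u z) := by
    simp only [← integral_neg, neg_sub]
  linarith

end Nonneg

theorem le_circleAverage_of_forall_mem_sphere_le (hu : Continuous u) (hr : 0 ≤ r)
    (h : ∀ z ∈ sphere c r, B ≤ u z) : B ≤ circleAverage u c r := by
  have mono := circleAverage_mono (continuousOn_const (c := B)).circleIntegrable'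
    hu.continuousOn.circleIntegrable' (by rwa [abs_of_nonneg hr])
  rwa [circleAverage_const] at mono

section Complete

variable (hu : ContDiff ℝ 2 u) (hΔ : ∀ z, Δ u z ≤ 0) (hcomp : IsConformallyComplete u)
include hu hΔ hcomp

/-- The circle averages decay like `-a * log R` once the mass exceeds `a`, whereas completeness
keeps `u` above `-(1 + ε) * log R` on arbitrarily large circles. -/
theorem curvatureMass_le_one (r : ℝ) : curvatureMass u 0 r ≤ 1 := by
  by_contra! one_lt
  obtain ⟨ε, hε⟩ : ∃ ε, curvatureMass u 0 r = 1 + 2 * ε := ⟨(curvatureMass u 0 r - 1) / 2, by ring⟩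
  have hε0 : 0 < ε := by linarith
  have antitone := antitoneOn_circleAverage_add_mul_log hu (c := 0)
    (convex_Ici (max r 1)) (fun t ht => one_pos.trans_le ((le_max_right r 1).trans ht))
    fun t ht => monotone_curvatureMass hu hΔ 0 ((le_max_left r 1).trans ht)
  have lower := frequently_forall_mem_sphere_neg_mul_log_le (hu.of_le one_le_two)
    (fun z => squareSuperharmonicAt_of_laplacian_nonpos hu.contDiffAt (hΔ z)) hcomp hε0
  have large := (tendsto_log_atTop.const_mul_atTop hε0).eventually_gt_atTop
    (circleAverage u 0 (max r 1) + (1 + 2 * ε) * log (max r 1))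
  obtain ⟨R, hR, hRr, hRlarge⟩ :=
    (lower.and_eventually ((eventually_ge_atTop (max r 1)).and large)).exists
  have average_le := antitone Set.self_mem_Ici hRr hRr
  have le_average := le_circleAverage_of_forall_mem_sphere_le hu.continuous
    ((by positivity : 0 ≤ max r 1).trans hRr) hR
  simp only [hε] at average_le
  linarith

theorem exists_tendsto_curvatureMass (hflat : ∃ z, Δ u z ≠ 0) :
    ∃ m, 0 < m ∧ m ≤ 1 ∧ Tendsto (curvatureMass u 0) atTop (𝓝 m) := by
  obtain ⟨z, hz⟩ := hflat
  have bounded : BddAbove (Set.range (curvatureMass u 0)) :=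
    ⟨1, Set.forall_mem_range.2 (curvatureMass_le_one hu hΔ hcomp)⟩
  exact ⟨⨆ r, curvatureMass u 0 r,
    (curvatureMass_pos hu hΔ hz (lt_add_one (dist z 0))).trans_le (le_ciSup bounded _),
    ciSup_le (curvatureMass_le_one hu hΔ hcomp),
    tendsto_atTop_ciSup (monotone_curvatureMass hu hΔ 0) bounded⟩

end Complete

theorem isLittleO_circleAverage_add_mul_log (hu : ContDiff ℝ 2 u) (hΔ : ∀ z, Δ u z ≤ 0) {m : ℝ}
    (hm : Tendsto (curvatureMass u 0) atTop (𝓝 m)) :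
    (fun r => circleAverage u 0 r + m * log r) =o[atTop] log := by
  have mass_le := (monotone_curvatureMass hu hΔ 0).ge_of_tendsto hm
  refine Asymptotics.isLittleO_iff.2 fun ε hε => ?_
  obtain ⟨r₁, hr₁, one_le⟩ := ((hm.eventually_const_lt (sub_lt_self m (half_pos hε))).and
    (eventually_ge_atTop 1)).exists
  have monotone := monotoneOn_circleAverage_add_mul_log hu (convex_Ici 1)
    (fun t ht => one_pos.trans_le ht) fun t _ => mass_le t
  have antitone := antitoneOn_circleAverage_add_mul_log hu (convex_Ici r₁)
    (fun t ht => (one_pos.trans_le one_le).trans_le ht)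
    fun t ht => hr₁.le.trans (monotone_curvatureMass hu hΔ 0 ht)
  filter_upwards [eventually_ge_atTop r₁,
    (tendsto_log_atTop.const_mul_atTop hε).eventually_ge_atTop (-circleAverage u 0 1),
    (tendsto_log_atTop.const_mul_atTop (half_pos hε)).eventually_ge_atTop
      (circleAverage u 0 r₁ + (m - ε / 2) * log r₁)] with r hr lower upper
  have le_average := monotone Set.self_mem_Ici (one_le.trans hr) (one_le.trans hr)
  have average_le := antitone Set.self_mem_Ici hr hr
  simp only [log_one, mul_zero, add_zero] at le_average
  rw [norm_eq_abs, norm_of_nonneg (log_nonneg (one_le.trans hr)), abs_le]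
  constructor <;> linarith

end CurvatureMass

section Comparison

open Real Bornology

theorem minimum_principle_exterior {q : ℂ → ℝ} {c : ℂ} {R m : ℝ}
    (hc : ContinuousOn q (ball c R)ᶜ) (hq : ∀ z ∈ (ball c R)ᶜ, SquareSuperharmonicAt q z)
    (hm : ∀ z ∈ sphere c R, m ≤ q z) (hfreq : ∃ᶠ ρ in atTop, ∀ z ∈ sphere c ρ, m ≤ q z)
    {z : ℂ} (hz : z ∈ (ball c R)ᶜ) : m ≤ q z := by
  obtain ⟨ρ, hρ, hzρ⟩ := (hfreq.and_eventually (eventually_ge_atTop (dist z c))).exists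
  refine minimum_principle ((isCompact_closedBall c ρ).inter_right isOpen_ball.isClosed_compl)
    (hc.mono Set.inter_subset_right) (fun w hw => hq w (interior_subset hw).2) (fun w hw => ?_)
    ⟨mem_closedBall.2 hzρ, hz⟩
  rcases frontier_inter_subset _ _ hw with ⟨outer, -⟩ | ⟨-, inner⟩
  · exact hρ w (frontier_closedBall_subset_sphere outer)
  · rw [frontier_compl] at inner
    exact hm w (frontier_ball_subset_sphere inner)

variable {u : ℂ → ℝ} {z : ℂ} {r R C η : ℝ}

section Complete

variable (hu : ContDiff ℝ 2 u) (hΔ : ∀ z, Δ u z ≤ 0) (hcomp : IsConformallyComplete u)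
include hu hΔ hcomp

theorem exists_mem_sphere_le_add_four (hR : 0 < R) :
    ∃ b, ∃ y ∈ sphere (0 : ℂ) R, u y ≤ b + 4 ∧ ∀ z ∈ closedBall (0 : ℂ) (5 * R), b ≤ u z := by
  have hs (z : ℂ) : SquareSuperharmonicAt u z :=
    squareSuperharmonicAt_of_laplacian_nonpos hu.contDiffAt (hΔ z)
  obtain ⟨y, hy, hymin⟩ := (isCompact_sphere (0 : ℂ) R).exists_isMinOn
    (NormedSpace.sphere_nonempty.2 hR.le) hu.continuous.continuousOn
  obtain ⟨x, hx, hxmin⟩ := (isCompact_sphere (0 : ℂ) (5 * R)).exists_isMinOn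
    (NormedSpace.sphere_nonempty.2 (by positivity)) hu.continuous.continuousOn
  refine ⟨u x, y, hy, ?_, fun z => minimum_principle_punctured hu.continuous (fun z _ => hs z)
    (by positivity) hxmin⟩
  have ne_zero (z : ℂ) (hz : z ∈ (ball 0 R)ᶜ) : z ≠ 0 := by
    rintro rfl
    exact hz (mem_ball_self hR)
  have large : ∃ᶠ ρ in atTop, ∀ z ∈ sphere (0 : ℂ) ρ, u y + 2 * log R ≤ u z + 2 * log ‖z - 0‖ := by
    refine ((frequently_forall_mem_sphere_neg_mul_log_le (hu.of_le one_le_two) hs hcomp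
      one_half_pos).and_eventually ((tendsto_log_atTop.const_mul_atTop
        one_half_pos).eventually_ge_atTop (u y + 2 * log R))).mono fun ρ ⟨hρ, hlog⟩ z hz => ?_
    rw [mem_sphere_iff_norm.1 hz]
    linarith [hρ z hz, hlog]
  have key := minimum_principle_exterior (q := fun z => u z + 2 * log ‖z - 0‖)
    (hu.continuous.continuousOn.add (continuousOn_const.mul (ContinuousOn.log (by fun_prop)
      fun z hz => by simpa using ne_zero z hz)))
    (fun z hz => (hs z).add (squareSuperharmonicAt_const_mul_log_norm_sub 2 (ne_zero z hz)))
    (fun z hz => by rw [mem_sphere_iff_norm.1 hz]; gcongr; exact hymin hz) large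
    (z := x) (by simp [mem_sphere.1 hx]; linarith)
  rw [mem_sphere_iff_norm.1 hx, log_mul (by norm_num) hR.ne'] at key
  linarith [log_five_lt_d9]

theorem exists_sq_mul_circleAverage_sub_le (hR : 0 < R) :
    ∃ b, (∀ z ∈ closedBall (0 : ℂ) (5 * R), b ≤ u z) ∧ ∀ (c : ℂ) (s : ℝ), 0 ≤ s →
      ‖c‖ + s ≤ 3 * R → s ^ 2 * (circleAverage u c s - b) ≤ 64 * R ^ 2 := by
  obtain ⟨b, y, hy, hyb, hb⟩ := exists_mem_sphere_le_add_four hu hΔ hcomp hR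
  rw [mem_sphere] at hy
  refine ⟨b, hb, fun c s hs hcs => le_of_mul_le_mul_left ?_ pi_pos⟩
  have small_subset : ball c s ⊆ ball y (4 * R) := ball_subset_ball' (by
    linarith [dist_triangle_right c y 0, dist_zero_right c])
  have subset_large : ball y (4 * R) ⊆ closedBall 0 (5 * R) :=
    (ball_subset_ball' (by linarith)).trans ball_subset_closedBall
  have mean_le (ρ : ℝ) (hρ : ρ ∈ Set.Icc 0 (4 * R)) : circleAverage u y ρ ≤ b + 4 :=
    (circleAverage_le_center hu.continuous
      (fun z => squareSuperharmonicAt_of_laplacian_nonpos hu.contDiffAt (hΔ z)) y hρ.1).trans hyb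
  calc π * (s ^ 2 * (circleAverage u c s - b)) = π * s ^ 2 * (circleAverage u c s - b) := by ring
    _ ≤ ∫ z in ball c s, (u z - b) := mul_circleAverage_sub_le hu hΔ hs b
    _ ≤ π * (4 * R) ^ 2 * 4 := setIntegral_ball_sub_le hu.continuous (by positivity) small_subset
        (fun z hz => hb z (subset_large hz)) mean_le
    _ = π * (64 * R ^ 2) := by ring

theorem circleAverage_norm_sub_le (z : ℂ) : circleAverage u 0 ‖z‖ - 8 ≤ u z := by
  rcases eq_or_ne z 0 with rfl | hz
  · simp
  have norm_pos : 0 < ‖z‖ := norm_pos_iff.2 hz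
  obtain ⟨b, hb, average_le⟩ := exists_sq_mul_circleAverage_sub_le hu hΔ hcomp
    (R := ‖z‖ / 3) (by positivity)
  have le_value : b ≤ u z := hb z (by rw [mem_closedBall_zero_iff]; linarith)
  have average_sub_le : circleAverage u 0 ‖z‖ - b ≤ 8 := by
    refine le_of_mul_le_mul_left ?_ (pow_pos norm_pos 2)
    linarith [average_le 0 ‖z‖ norm_pos.le (by rw [norm_zero]; linarith), pow_pos norm_pos 2]
  linarith

theorem circleAverage_le_circleAverage_zero_add (hR : 0 < R) (hz : ‖z‖ ≤ 2 * R) :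
    circleAverage u z (R / 4) ≤ circleAverage u 0 R + 1024 := by
  obtain ⟨b, hb, average_le⟩ := exists_sq_mul_circleAverage_sub_le hu hΔ hcomp hR
  have le_average : b ≤ circleAverage u 0 R :=
    le_circleAverage_of_forall_mem_sphere_le hu.continuous hR.le fun w hw =>
      hb w (closedBall_subset_closedBall (by linarith) (sphere_subset_closedBall hw))
  have average_sub_le : circleAverage u z (R / 4) - b ≤ 1024 := by
    refine le_of_mul_le_mul_left ?_ (pow_pos hR 2)
    linarith [average_le z (R / 4) (by positivity) (by linarith)]
  linarith

end Complete

/-- The normalised total curvature of the annulus `R / 2 ≤ ‖z‖ < 2 * R`, whose smallness for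
large `R` makes `u` almost radial. -/
noncomputable def annularCurvature (u : ℂ → ℝ) (R : ℝ) : ℝ :=
  curvatureMass u 0 (2 * R) - curvatureMass u 0 (R / 2)

theorem tendsto_annularCurvature {m : ℝ} (hm : Tendsto (curvatureMass u 0) atTop (𝓝 m)) :
    Tendsto (annularCurvature u) atTop (𝓝 0) := by
  rw [← sub_self m]
  exact (hm.comp (tendsto_id.const_mul_atTop two_pos)).sub
    (hm.comp (tendsto_id.atTop_div_const two_pos))

theorem annularCurvature_nonneg (hu : ContDiff ℝ 2 u) (hΔ : ∀ z, Δ u z ≤ 0) (hR : 0 ≤ R) :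
    0 ≤ annularCurvature u R :=
  sub_nonneg.2 (monotone_curvatureMass hu hΔ 0 (by linarith))

theorem curvatureMass_le_annularCurvature (hu : ContDiff ℝ 2 u) (hΔ : ∀ z, Δ u z ≤ 0)
    (hz : |‖z‖ - R| ≤ R / 4) : curvatureMass u z (R / 4) ≤ annularCurvature u R := by
  obtain ⟨lower, upper⟩ := abs_le.1 hz
  refine curvatureMass_le_sub hu hΔ (by linarith) fun w hw => ?_
  rw [mem_ball_iff_norm] at hw
  constructor
  · rw [mem_ball_zero_iff]
    linarith [norm_le_norm_add_norm_sub' w z]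
  · rw [mem_ball_zero_iff, not_lt]
    linarith [norm_le_norm_add_norm_sub' z w, norm_sub_rev z w]

/-- On the scale `exp (-u z)` the curvature bound makes `Δ u` bounded in the metric rescaled to
unit size. -/
theorem le_circleAverage_exp_neg_add (hu : ContDiff ℝ 2 u) (hC : 0 ≤ C)
    (hcurv : ∀ w, -Δ u w ≤ C * exp (2 * u w))
    (hdouble : ∀ w ∈ ball z (exp (-u z)), exp (u w) ≤ 2 * exp (u z)) :
    u z ≤ circleAverage u z (exp (-u z)) + C := by
  have neg_laplacian_le (w : ℂ) (hw : w ∈ ball z (exp (-u z))) :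
      -Δ u w ≤ 4 * C * exp (u z) ^ 2 :=
    calc -Δ u w ≤ C * exp (2 * u w) := hcurv w
      _ = C * exp (u w) ^ 2 := by rw [← exp_nat_mul]; norm_num
      _ ≤ C * (2 * exp (u z)) ^ 2 := by gcongr; exact hdouble w hw
      _ = 4 * C * exp (u z) ^ 2 := by ring
  have average := le_circleAverage_add_mul_sq hu (B := 2 * C * exp (u z) ^ 2)
    (exp_pos (-u z)).le fun t ht =>
      (curvatureMass_le_of_neg_laplacian_le hu ht.1 fun w hw =>
        neg_laplacian_le w (ball_subset_ball ht.2 hw)).trans_eq (by ring)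
  have scale : exp (u z) * exp (-u z) = 1 := by rw [← exp_add, add_neg_cancel, exp_zero]
  linear_combination average + C * (exp (u z) * exp (-u z) + 1) * scale

theorem one_sub_mul_le_circleAverage_add (hu : ContDiff ℝ 2 u) (hΔ : ∀ z, Δ u z ≤ 0) (hC : 0 ≤ C)
    (hcurv : ∀ w, -Δ u w ≤ C * exp (2 * u w))
    (hdouble : ∀ w ∈ ball z (exp (-u z)), exp (u w) ≤ 2 * exp (u z)) (hr : exp (-u z) ≤ r)
    (hη : curvatureMass u z r ≤ η) :
    (1 - η) * u z ≤ circleAverage u z r + η * log r + C := by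
  have monotone := monotoneOn_circleAverage_add_mul_log hu (convex_Icc (exp (-u z)) r)
    (fun t ht => (exp_pos _).trans_le ht.1)
    (fun t ht => (monotone_curvatureMass hu hΔ z ht.2).trans hη)
    (Set.left_mem_Icc.2 hr) (Set.right_mem_Icc.2 hr) hr
  simp only [log_exp] at monotone
  linarith [le_circleAverage_exp_neg_add hu hC hcurv hdouble]

theorem le_add_of_one_sub_mul_le {v X Y η : ℝ} (hη0 : 0 ≤ η) (hη : η ≤ 1 / 2) (hXY : X ≤ Y)
    (hY : 0 ≤ Y) (h : (1 - η) * v ≤ X) : v ≤ X + 2 * η * Y := by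
  refine le_of_mul_le_mul_left (h.trans ?_) (by linarith : 0 < 1 - η)
  have := mul_nonneg hη0 (sub_nonneg.2 hXY)
  have := mul_nonneg (mul_nonneg hη0 hY) (sub_nonneg.2 hη)
  linarith

section Complete

variable (hu : ContDiff ℝ 2 u) (hΔ : ∀ z, Δ u z ≤ 0) (hcomp : IsConformallyComplete u)
include hu hΔ hcomp

theorem circleAverage_one_le_add_log (hR : 1 ≤ R) :
    circleAverage u 0 1 ≤ circleAverage u 0 R + log R := by
  simpa using monotoneOn_circleAverage_add_mul_log hu (convex_Ici 1)
    (fun t ht => one_pos.trans_le ht) (fun t _ => curvatureMass_le_one hu hΔ hcomp t)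
    Set.self_mem_Ici hR hR

variable (hC : 0 ≤ C) (hcurv : ∀ w, -Δ u w ≤ C * exp (2 * u w))
include hC hcurv

theorem le_circleAverage_zero_add_of_doubling (hR : 1 ≤ R) (hη : annularCurvature u R ≤ 1 / 2)
    (hz : |‖z‖ - R| ≤ R / 4)
    (hdouble : ∀ w ∈ ball z (exp (-u z)), exp (u w) ≤ 2 * exp (u z)) (hr : exp (-u z) ≤ R / 4) :
    u z ≤ circleAverage u 0 R + (|circleAverage u 0 1| + 2048 + 2 * C) +
      3 * annularCurvature u R * log R := by
  set η := annularCurvature u R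
  set a := circleAverage u 0 1
  set A := circleAverage u 0 R
  have hη0 : 0 ≤ η := annularCurvature_nonneg hu hΔ (zero_le_one.trans hR)
  have hlog : 0 ≤ log R := log_nonneg hR
  have average_le : circleAverage u z (R / 4) ≤ A + 1024 :=
    circleAverage_le_circleAverage_zero_add hu hΔ hcomp (by linarith)
      (by linarith [(abs_le.1 hz).2])
  have log_le : η * log (R / 4) ≤ η * log R := by gcongr; linarith
  have A_le : A ≤ |a| :=
    (antitoneOn_circleAverage hu hΔ 0 (Set.mem_Ici.2 zero_le_one) (zero_le_one.trans hR)
      hR).trans (le_abs_self a)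
  have weighted : (1 - η) * u z ≤ A + 1024 + C + η * log R := by
    linarith [one_sub_mul_le_circleAverage_add hu hΔ hC hcurv hdouble hr
      (curvatureMass_le_annularCurvature hu hΔ hz)]
  have bound := le_add_of_one_sub_mul_le (Y := |a| + 1024 + C + log R) hη0 hη
    (by linarith [mul_le_mul_of_nonneg_right hη hlog]) (by positivity) weighted
  have : η * (|a| + 1024 + C) ≤ 1 / 2 * (|a| + 1024 + C) := by gcongr
  linarith

theorem exists_le_circleAverage_zero_add :
    ∃ K, ∀ R ≥ 1, annularCurvature u R ≤ 1 / 2 → ∀ z ∈ sphere (0 : ℂ) R,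
      u z ≤ circleAverage u 0 R + K + 3 * annularCurvature u R * log R := by
  refine ⟨|circleAverage u 0 1| + 2048 + 2 * C + log 8, fun R hR hη z₀ hz₀ => ?_⟩
  have hR0 : 0 < R := one_pos.trans_le hR
  have hlog8 : 0 ≤ log 8 := log_nonneg (by norm_num)
  obtain ⟨σ, hσ, z, hσR, hz, hvalue, hdouble⟩ := hofer z₀ (R / 8) (by positivity)
    (continuous_exp.comp hu.continuous) fun w => (exp_pos (u w)).le
  simp only [Function.comp_apply] at hvalue hdouble
  have z_near : |‖z‖ - R| ≤ R / 4 := by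
    rw [← mem_sphere_zero_iff_norm.1 hz₀]
    refine (abs_norm_sub_norm_le z z₀).trans ?_
    rw [← dist_eq_norm, mem_sphere_zero_iff_norm.1 hz₀]
    linarith
  rcases le_total (exp (-u z)) σ with large | small
  · have value_le : u z₀ ≤ u z := by
      refine exp_le_exp.1 (le_of_mul_le_mul_left (hvalue.trans ?_) (by positivity : 0 < R / 8))
      gcongr
    have := le_circleAverage_zero_add_of_doubling hu hΔ hcomp hC hcurv hR hη z_near
      (fun w hw => hdouble w ((mem_ball'.1 hw).le.trans large)) (by linarith)
    linarith
  · have value_le : u z₀ ≤ log 8 - log R := by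
      rw [← log_div (by norm_num) hR0.ne', le_log_iff_exp_le (by positivity), le_div_iff₀ hR0]
      have : σ * exp (u z) ≤ exp (-u z) * exp (u z) := by gcongr
      rw [← exp_add, neg_add_cancel, exp_zero] at this
      linarith
    have := mul_nonneg (annularCurvature_nonneg hu hΔ hR0.le) (log_nonneg hR)
    linarith [circleAverage_one_le_add_log hu hΔ hcomp hR, neg_abs_le (circleAverage u 0 1)]

theorem isLittleO_add_mul_log_norm {m : ℝ} (hm : Tendsto (curvatureMass u 0) atTop (𝓝 m)) :
    (fun z => u z + m * log ‖z‖) =o[cobounded ℂ] fun z => log ‖z‖ := by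
  obtain ⟨K, hK⟩ := exists_le_circleAverage_zero_add hu hΔ hcomp hC hcurv
  have hη := tendsto_annularCurvature hm
  have error : (fun R => |K| + 8 + 3 * annularCurvature u R * log R) =o[atTop] log := by
    refine isLittleO_const_log_atTop.add ?_
    simpa using ((Asymptotics.isLittleO_one_iff ℝ).2 (by simpa using hη.const_mul 3)).mul_isBigO
      (Asymptotics.isBigO_refl log atTop)
  have radial : (fun z => u z - circleAverage u 0 ‖z‖) =o[cobounded ℂ] fun z => log ‖z‖ := by
    refine Asymptotics.IsBigO.trans_isLittleO (Asymptotics.IsBigO.of_bound' ?_)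
      (error.comp_tendsto tendsto_norm_cobounded_atTop)
    filter_upwards [tendsto_norm_cobounded_atTop.eventually ((eventually_ge_atTop 1).and
      (hη.eventually_le_const one_half_pos))] with z ⟨hz, hηz⟩
    have upper := hK ‖z‖ hz hηz z (by simp)
    have lower := circleAverage_norm_sub_le hu hΔ hcomp z
    have := mul_nonneg (annularCurvature_nonneg hu hΔ (norm_nonneg z)) (log_nonneg hz)
    refine le_trans ?_ (le_abs_self _)
    rw [norm_eq_abs, abs_le]
    constructor <;> simp only [Function.comp_apply] <;> linarith [le_abs_self K, abs_nonneg K]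
  refine (radial.add ((isLittleO_circleAverage_add_mul_log hu hΔ hm).comp_tendsto
    tendsto_norm_cobounded_atTop)).congr_left fun z => ?_
  simp only [Function.comp_apply]
  ring

end Complete

end Comparison

section Isometry

variable {E F : Type*}

theorem laplacian_comp_linearIsometryEquiv [NormedAddCommGroup E] [InnerProductSpace ℝ E]
    [FiniteDimensional ℝ E] [NormedAddCommGroup F] [InnerProductSpace ℝ F] [FiniteDimensional ℝ F]
    {G : Type*} [NormedAddCommGroup G] [NormedSpace ℝ G] (L : E ≃ₗᵢ[ℝ] F) (u : F → G) (z : E) :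
    Δ (u ∘ L) z = Δ u (L z) := by
  have hderiv (v : E) :
      iteratedFDeriv ℝ 2 (u ∘ L) z ![v, v] = iteratedFDeriv ℝ 2 u (L z) ![L v, L v] := by
    have := DFunLike.congr_fun (L.toContinuousLinearEquiv.iteratedFDerivWithin_comp_right u
      uniqueDiffOn_univ (Set.mem_univ (L z)) 2) ![v, v]
    simpa [iteratedFDerivWithin_univ, iteratedFDeriv_two_apply] using this
  simp [InnerProductSpace.laplacian_eq_iteratedFDeriv_orthonormalBasis _
    (stdOrthonormalBasis ℝ E), InnerProductSpace.laplacian_eq_iteratedFDeriv_orthonormalBasis u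
    ((stdOrthonormalBasis ℝ E).map L), hderiv]

theorem lap_eq_laplacian {u : EuclideanSpace ℝ (Fin 2) → ℝ} (hu : ContDiff ℝ 2 u)
    (z : EuclideanSpace ℝ (Fin 2)) : lap u z = Δ u z := by
  have hderiv (v : EuclideanSpace ℝ (Fin 2)) :
      fderiv ℝ (fun w => fderiv ℝ u w v) z v = fderiv ℝ (fderiv ℝ u) z v v := by
    simp [fderiv_clm_apply ((hu.fderiv_right (m := 1) (by norm_num)).differentiable one_ne_zero z)
      (differentiableAt_const v)]
  simp [InnerProductSpace.laplacian_eq_iteratedFDeriv_orthonormalBasis u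
    (EuclideanSpace.basisFun (Fin 2) ℝ), iteratedFDeriv_two_apply, lap, hderiv]

theorem IsConformallyComplete.comp_linearIsometryEquiv [NormedAddCommGroup E] [NormedSpace ℝ E]
    [NormedAddCommGroup F] [NormedSpace ℝ F] {u : F → ℝ} (hu : IsConformallyComplete u)
    (L : E ≃ₗᵢ[ℝ] F) : IsConformallyComplete (u ∘ L) := fun γ hγ hdiv => by
  rw [← hu (L ∘ γ) (L.contDiff.comp_contDiffOn hγ) (by simpa using hdiv)]
  refine setLIntegral_congr_fun measurableSet_Ioo fun t ht => ?_
  have hderiv := ((hγ.differentiableOn one_ne_zero).differentiableAt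
    (Ico_mem_nhds ht.1 ht.2)).hasDerivAt
  have := (L.toContinuousLinearEquiv.hasFDerivAt.comp_hasDerivAt t hderiv).deriv
  have : deriv (L ∘ γ) t = L (deriv γ t) := this
  simp [conformalSpeed, this]

end Isometry

section LogSqrt

open Real Asymptotics Bornology

theorem isLittleO_log_sqrt_one_add_sq_sub_log :
    (fun r => log √(1 + r ^ 2) - log r) =o[atTop] log := by
  refine IsLittleO.trans_isBigO (g := fun _ => (1 : ℝ)) ((isLittleO_one_iff ℝ).2 ?_)
    (isLittleO_const_log_atTop).isBigO
  have := ((tendsto_log_comp_add_sub_log 1).comp (tendsto_pow_atTop two_ne_zero)).div_const 2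
  rw [zero_div] at this
  refine this.congr fun r => ?_
  rw [log_sqrt (by positivity), Function.comp_apply, log_pow, add_comm]
  push_cast
  ring

theorem tendsto_div_log_sqrt_of_isLittleO {E : Type*} [NormedAddCommGroup E] {u : E → ℝ} {m : ℝ}
    (h : (fun z => u z + m * log ‖z‖) =o[cobounded E] fun z => log ‖z‖) :
    Tendsto (fun z => u z / log √(1 + ‖z‖ ^ 2)) (cobounded E) (𝓝 (-m)) := by
  have log_isBigO : log =O[atTop] fun r => log √(1 + r ^ 2) := by
    refine IsBigO.of_bound' ?_
    filter_upwards [eventually_ge_atTop 1] with r hr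
    have log_le : log r ≤ log √(1 + r ^ 2) :=
      log_le_log (by linarith) (le_sqrt_of_sq_le (by linarith))
    rwa [norm_of_nonneg (log_nonneg hr), norm_of_nonneg ((log_nonneg hr).trans log_le)]
  have remainder := (h.add ((isLittleO_log_sqrt_one_add_sq_sub_log.comp_tendsto
    tendsto_norm_cobounded_atTop).const_mul_left m)).trans_isBigO
      (log_isBigO.comp_tendsto tendsto_norm_cobounded_atTop)
  have limit := remainder.tendsto_div_nhds_zero.sub_const m
  rw [zero_sub] at limit
  refine limit.congr' ?_
  filter_upwards [tendsto_norm_cobounded_atTop.eventually (eventually_gt_atTop 0)] with z hz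
  have : 0 < log √(1 + ‖z‖ ^ 2) := log_pos (lt_sqrt_of_sq_lt (by simpa using pow_pos hz 2))
  simp only [Function.comp_apply]
  field_simp
  ring

end LogSqrt

/-- Sharp growth estimate for the conformal factor of a complete, noncompact,
nonnegatively curved, nonflat metric `e^{2u}(dx² + dy²)` on `ℝ²` with bounded
Gaussian curvature `K = (-Δu) e^{-2u}`:
`u = -m log √(1+|z|²) + o(log √(1+|z|²))` as `|z| → ∞` for some `m ∈ (0,1]`. -/
theorem growth_estimate_Gaussian_curvature_equation
    (u : EuclideanSpace ℝ (Fin 2) → ℝ)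
    (hu : ContDiff ℝ 2 u)
    (hsuper : ∀ z, lap u z ≤ 0)
    (hbddcurv : ∃ C : ℝ, ∀ z, |(-lap u z) * Real.exp (-(2 * u z))| ≤ C)
    (hnonflat : ∃ z, lap u z ≠ 0)
    (hcomplete : ∀ γ : ℝ → EuclideanSpace ℝ (Fin 2),
      ContDiffOn ℝ 1 γ (Set.Ico 0 1) →
      Tendsto (fun t => ‖γ t‖) (nhdsWithin 1 (Set.Iio 1)) atTop →
      ∫⁻ t in Set.Ioo (0:ℝ) 1, ENNReal.ofReal (Real.exp (u (γ t)) * ‖deriv γ t‖) = ⊤) :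
    ∃ m : ℝ, 0 < m ∧ m ≤ 1 ∧
      Tendsto (fun z => u z / Real.log (Real.sqrt (1 + ‖z‖ ^ 2)))
        (comap norm atTop) (nhds (-m)) := by
  obtain ⟨C, hC⟩ := hbddcurv
  obtain ⟨z₀, hz₀⟩ := hnonflat
  let L := Complex.orthonormalBasisOneI.repr
  have hv : ContDiff ℝ 2 (u ∘ L) := hu.comp L.contDiff
  have laplacian_eq z : Δ (u ∘ L) z = lap u (L z) := by
    rw [laplacian_comp_linearIsometryEquiv, lap_eq_laplacian hu]
  have superharmonic z : Δ (u ∘ L) z ≤ 0 := (laplacian_eq z).trans_le (hsuper _)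
  have complete : IsConformallyComplete (u ∘ L) :=
    IsConformallyComplete.comp_linearIsometryEquiv hcomplete L
  have curvature_le z : -Δ (u ∘ L) z ≤ C * Real.exp (2 * u (L z)) := by
    have := (le_abs_self _).trans (hC (L z))
    rwa [Real.exp_neg, ← div_eq_mul_inv, div_le_iff₀ (Real.exp_pos _), ← laplacian_eq] at this
  obtain ⟨m, m_pos, m_le_one, mass_tendsto⟩ := exists_tendsto_curvatureMass hv superharmonic
    complete ⟨L.symm z₀, by simpa [laplacian_eq] using hz₀⟩
  have growth := isLittleO_add_mul_log_norm hv superharmonic complete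
    ((abs_nonneg _).trans (hC 0)) curvature_le mass_tendsto
  refine ⟨m, m_pos, m_le_one, ?_⟩
  rw [comap_norm_atTop]
  refine tendsto_div_log_sqrt_of_isLittleO ?_
  simpa [Function.comp_def] using
    growth.comp_tendsto L.symm.antilipschitz.tendsto_cobounded
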